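/- Let S be a set and let R be a symmetrized subset of the free group F(S) satisfying the metric C′(1/6) small-cancellation condition, i.e. every piece p relative to R occurring in a reduced factorization r = p·v with r ∈ R satisfies 6·|p| < |r|. Then the presented group G = ⟨S | R⟩ contains no subgroup isomorphic to F₂ × F₂, where F₂ denotes the free group on two generators. -/

import Mathlib

/-- Length of the reduced word of an element of a free group. -/
def FG.len {S : Type*} [DecidableEq S] (g : FreeGroup S) : ℕ :=
  g.toWord.length

/-- `r` is cyclically reduced: every conjugate is at least as long. -/
def FG.CyclicallyReduced {S : Type*} [DecidableEq S] (r : FreeGroup S) : Prop :=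
  ∀ g : FreeGroup S, FG.len r ≤ FG.len (g⁻¹ * r * g)

/-- `R` is a symmetrized subset: every element is nontrivial and cyclically
reduced, `R` is closed under inversion and under cyclic permutation. -/
def FG.Symmetrized {S : Type*} [DecidableEq S] (R : Set (FreeGroup S)) : Prop :=
  (∀ r ∈ R, r ≠ 1 ∧ FG.CyclicallyReduced r) ∧
  (∀ r ∈ R, r⁻¹ ∈ R) ∧
  (∀ r ∈ R, ∀ u v : FreeGroup S,
      r = u * v → FG.len r = FG.len u + FG.len v → v * u ∈ R)

/-- `p` is a piece relative to `R`. -/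
def FG.IsPiece {S : Type*} [DecidableEq S] (R : Set (FreeGroup S))
    (p : FreeGroup S) : Prop :=
  p ≠ 1 ∧
  ∃ r₁ ∈ R, ∃ r₂ ∈ R, r₁ ≠ r₂ ∧
    (∃ v₁ : FreeGroup S, r₁ = p * v₁ ∧ FG.len r₁ = FG.len p + FG.len v₁) ∧
    (∃ v₂ : FreeGroup S, r₂ = p * v₂ ∧ FG.len r₂ = FG.len p + FG.len v₂)

/-- The C(6) small-cancellation condition: no relator is a reduced
concatenation of at most 5 pieces. -/
def FG.C6 {S : Type*} [DecidableEq S] (R : Set (FreeGroup S)) : Prop :=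
  ¬ ∃ r ∈ R, ∃ ps : List (FreeGroup S),
      ps.length ≤ 5 ∧ (∀ p ∈ ps, FG.IsPiece R p) ∧
      r = ps.prod ∧ FG.len r = (ps.map FG.len).sum

/-- The metric C′(1/6) small-cancellation condition: every piece occurring
as a reduced prefix of a relator is shorter than one sixth of the relator. -/
def FG.CPrimeSixth {S : Type*} [DecidableEq S] (R : Set (FreeGroup S)) : Prop :=
  ∀ r ∈ R, ∀ p v : FreeGroup S, FG.IsPiece R p →
    r = p * v → FG.len r = FG.len p + FG.len v → 6 * FG.len p < FG.len r

/-!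
A copy of `F₂ × F₂` contains a copy of `ℤ × ℤ`, and a C′(1/6) group contains none. Suppose there is
one, and let `K` be the corresponding covering of the presentation complex. The cup product of the
two coordinate classes on its fundamental group `ℤ × ℤ` assigns a rational number to every face of
`K`, its area, and the torus of two commuting loops with coordinates `(1, 0)` and `(0, 1)` has total
area `1`.

Every torus has area zero, however. A pair of commuting loops yields a closed surface of genus at
most one, tiled by relators, with the area of the torus. Two neighbouring tiles that are mirror
images of each other have opposite areas, and removing both preserves the total area and does not
raise the genus. When no such pair is left the surface is empty: otherwise all pieces on the
boundary of a tile are shorter than a sixth of it, so each tile has at least seven vertices of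
degree at least three, the curvature is negative, and the genus exceeds one.
-/

namespace SmallCancellation

open Equiv Function
open scoped commutatorElement

/-! ### Cycles of a permutation -/

section CycleList

variable {D : Type*} {σ : Perm D} {l : List D} {d p q x : D}

/-- The list `l` runs once around a cycle of `σ`. -/
structure IsCycleList (σ : Perm D) (l : List D) : Prop where
  ne_nil : l ≠ []
  nodup : l.Nodup
  map_eq : l.map σ = l.rotate 1

/-- The cycle of `σ` through `d`, listed from `d` on; unlike `Equiv.Perm.toList` it is `[d]` when
`d` is fixed. -/
noncomputable def cycleList (σ : Perm D) (d : D) : List D :=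
  List.iterate σ d (minimalPeriod σ d)

lemma length_cycleList : (cycleList σ d).length = minimalPeriod σ d :=
  List.length_iterate ..

lemma getElem_cycleList {i : ℕ} (hi : i < (cycleList σ d).length) :
    (cycleList σ d)[i] = σ^[i] d := by
  simp only [cycleList, List.getElem_iterate]

lemma minimalPeriod_pos [Finite D] (σ : Perm D) (d : D) : 0 < minimalPeriod σ d :=
  minimalPeriod_pos_of_mem_periodicPts (σ.injective.mem_periodicPts d)

lemma isCycleList_cycleList [Finite D] (σ : Perm D) (d : D) : IsCycleList σ (cycleList σ d) where
  ne_nil := List.ne_nil_of_length_pos (length_cycleList ▸ minimalPeriod_pos σ d)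
  nodup := by
    refine List.nodup_iff_injective_get.2 fun i j hij => Fin.ext ?_
    simp only [List.get_eq_getElem, getElem_cycleList] at hij
    exact iterate_injOn_Iio_minimalPeriod (length_cycleList (σ := σ) (d := d) ▸ i.2)
      (length_cycleList (σ := σ) (d := d) ▸ j.2) hij
  map_eq := by
    refine List.ext_getElem (by simp) fun i _ _ => ?_
    rw [List.getElem_map, List.getElem_rotate, getElem_cycleList, getElem_cycleList,
      length_cycleList, iterate_mod_minimalPeriod_eq, iterate_succ_apply']

lemma cycleList_eq_cons [Finite D] (σ : Perm D) (d : D) : ∃ t, cycleList σ d = d :: t := by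
  obtain ⟨n, hn⟩ := Nat.exists_eq_succ_of_ne_zero (minimalPeriod_pos σ d).ne'
  exact ⟨_, by rw [cycleList, hn, List.iterate]⟩

namespace IsCycleList

lemma getElem_eq {t : List D} (h : IsCycleList σ (d :: t)) :
    ∀ {i : ℕ} (hi : i < (d :: t).length), (d :: t)[i] = σ^[i] d
  | 0, _ => rfl
  | i + 1, hi => by
    have hi' : i < ((d :: t).map σ).length := by simpa using Nat.lt_of_succ_lt hi
    have hstep : ((d :: t).map σ)[i] = (d :: t)[i + 1] := by
      simp only [h.map_eq, List.getElem_rotate, Nat.mod_eq_of_lt hi]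
    rw [← hstep, List.getElem_map, h.getElem_eq (Nat.lt_of_succ_lt hi), iterate_succ_apply']

lemma iterate_length {t : List D} (h : IsCycleList σ (d :: t)) :
    σ^[(d :: t).length] d = d := by
  have hlast : ((d :: t).map σ)[t.length]'(by simp) = d := by
    simp only [h.map_eq, List.getElem_rotate, List.length_cons, Nat.mod_self,
      List.getElem_cons_zero]
  rw [List.length_cons, iterate_succ_apply', ← h.getElem_eq (by simp)]
  rwa [List.getElem_map] at hlast

lemma cycleList_eq {t : List D} (h : IsCycleList σ (d :: t)) : cycleList σ d = d :: t := by
  have hper : minimalPeriod σ d = (d :: t).length := by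
    refine le_antisymm (IsPeriodicPt.minimalPeriod_le (by simp) h.iterate_length) ?_
    by_contra! hlt
    have hpos : 0 < minimalPeriod σ d :=
      IsPeriodicPt.minimalPeriod_pos (n := (d :: t).length) (by simp) h.iterate_length
    have heq : (d :: t)[minimalPeriod σ d] = (d :: t)[0] := by
      rw [h.getElem_eq hlt, iterate_minimalPeriod]; rfl
    exact hpos.ne' (h.nodup.getElem_inj_iff.1 heq)
  refine List.ext_getElem (length_cycleList.trans hper) fun i _ hi => ?_
  rw [getElem_cycleList, h.getElem_eq hi]

lemma rotate (h : IsCycleList σ l) (n : ℕ) : IsCycleList σ (l.rotate n) where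
  ne_nil := by simpa using h.ne_nil
  nodup := List.nodup_rotate.2 h.nodup
  map_eq := by rw [List.map_rotate, h.map_eq, List.rotate_rotate, List.rotate_rotate, add_comm]

lemma rotate_append {u v : List D} (h : IsCycleList σ (u ++ v)) : IsCycleList σ (v ++ u) := by
  simpa using h.rotate u.length

end IsCycleList

lemma mem_cycleList [Finite D] : x ∈ cycleList σ d ↔ σ.SameCycle d x := by
  rw [cycleList, List.mem_iterate]
  constructor
  · rintro ⟨m, _, rfl⟩
    exact ⟨m, by rw [zpow_natCast, Perm.iterate_eq_pow]⟩
  · intro h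
    obtain ⟨i, rfl⟩ := h.exists_nat_pow_eq
    exact ⟨i % minimalPeriod σ d, Nat.mod_lt _ (minimalPeriod_pos σ d), by
      rw [iterate_mod_minimalPeriod_eq, Perm.iterate_eq_pow]⟩

lemma mem_cycleList_congr [Finite D] (h : σ.SameCycle d p) :
    x ∈ cycleList σ d ↔ x ∈ cycleList σ p := by
  rw [mem_cycleList, mem_cycleList]
  exact ⟨h.symm.trans, h.trans⟩

lemma cycleList_eq_append [Finite D] (h : σ.SameCycle d x) :
    ∃ u v, cycleList σ d = u ++ x :: v ∧ cycleList σ x = x :: v ++ u := by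
  obtain ⟨u, v, huv⟩ := List.append_of_mem (mem_cycleList.2 h)
  exact ⟨u, v, huv, (huv ▸ isCycleList_cycleList σ d).rotate_append.cycleList_eq⟩

variable [DecidableEq D]

lemma map_swap_of_notMem (hp : p ∉ l) (hq : q ∉ l) : l.map (swap p q) = l :=
  (List.map_congr_left fun _ hx => swap_apply_of_ne_of_ne (ne_of_mem_of_not_mem hx hp)
    (ne_of_mem_of_not_mem hx hq)).trans l.map_id

namespace IsCycleList

lemma swap_mul_of_notMem (h : IsCycleList σ l) (hp : p ∉ l) (hq : q ∉ l) :
    IsCycleList (swap p q * σ) l where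
  ne_nil := h.ne_nil
  nodup := h.nodup
  map_eq := by
    rw [Perm.coe_mul, ← List.map_map, h.map_eq,
      map_swap_of_notMem (mt List.mem_rotate.1 hp) (mt List.mem_rotate.1 hq)]

lemma append_swap_mul {u v : List D} (hu : IsCycleList σ (p :: u)) (hv : IsCycleList σ (q :: v))
    (hdisj : (p :: u).Disjoint (q :: v)) :
    IsCycleList (swap p q * σ) (p :: u ++ q :: v) where
  ne_nil := by simp
  nodup := hu.nodup.append hv.nodup hdisj
  map_eq := by
    have hpu := hu.nodup.notMem
    have hqv := hv.nodup.notMem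
    have hpv : p ∉ v := fun h => hdisj List.mem_cons_self (List.mem_cons_of_mem q h)
    have hqu : q ∉ u := fun h => hdisj (List.mem_cons_of_mem p h) List.mem_cons_self
    rw [Perm.coe_mul, ← List.map_map, List.map_append, hu.map_eq, hv.map_eq]
    simp [map_swap_of_notMem hpu hqu, map_swap_of_notMem hpv hqv]

lemma split_swap_mul {u v : List D} (h : IsCycleList σ (p :: u ++ q :: v)) :
    IsCycleList (swap p q * σ) (p :: u) ∧ IsCycleList (swap p q * σ) (q :: v) := by
  obtain ⟨hu, hv, hdisj⟩ := List.nodup_append'.1 h.nodup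
  have hpu := hu.notMem
  have hqv := hv.notMem
  have hpv : p ∉ v := fun h => hdisj List.mem_cons_self (List.mem_cons_of_mem q h)
  have hqu : q ∉ u := fun h => hdisj (List.mem_cons_of_mem p h) List.mem_cons_self
  have hmap : (p :: u).map σ ++ (q :: v).map σ = (u ++ [q]) ++ (v ++ [p]) := by
    rw [← List.map_append, h.map_eq]
    simp
  obtain ⟨hmapu, hmapv⟩ := List.append_inj hmap (by simp)
  refine ⟨⟨by simp, hu, ?_⟩, ⟨by simp, hv, ?_⟩⟩
  · rw [Perm.coe_mul, ← List.map_map, hmapu]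
    simp [map_swap_of_notMem hpu hqu]
  · rw [Perm.coe_mul, ← List.map_map, hmapv]
    simp [map_swap_of_notMem hpv hqv]

end IsCycleList

end CycleList

section SwapCycles

variable {D : Type*} [Finite D] {σ : Perm D} {l : List D} {p q x y : D}

lemma IsCycleList.sameCycle_iff (h : IsCycleList σ l) (hx : x ∈ l) :
    σ.SameCycle x y ↔ y ∈ l := by
  obtain ⟨u, v, rfl⟩ := List.append_of_mem hx
  rw [← mem_cycleList, cycleList_eq (t := v ++ u) h.rotate_append, ← List.cons_append,
    List.mem_append, List.mem_append, or_comm]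

lemma disjoint_cycleList (h : ¬ σ.SameCycle p q) : (cycleList σ p).Disjoint (cycleList σ q) :=
  fun _ hp hq => h ((mem_cycleList.1 hp).trans (mem_cycleList.1 hq).symm)

variable [DecidableEq D]

lemma sameCycle_swap_mul (h : ¬ σ.SameCycle p q) : (swap p q * σ).SameCycle p q := by
  obtain ⟨u, hu⟩ := cycleList_eq_cons σ p
  obtain ⟨v, hv⟩ := cycleList_eq_cons σ q
  have hjoin := (hu ▸ isCycleList_cycleList σ p).append_swap_mul
    (hv ▸ isCycleList_cycleList σ q) (hu ▸ hv ▸ disjoint_cycleList h)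
  exact (hjoin.sameCycle_iff (by simp)).2 (by simp)

lemma not_sameCycle_swap_mul (hpq : p ≠ q) (h : σ.SameCycle p q) :
    ¬ (swap p q * σ).SameCycle p q := by
  obtain ⟨w, hw⟩ := cycleList_eq_cons σ p
  have hq : q ∈ w := by simpa [hw, hpq.symm] using mem_cycleList.2 h
  obtain ⟨u, v, rfl⟩ := List.append_of_mem hq
  have hcycle : IsCycleList σ (p :: u ++ q :: v) := by
    rw [List.cons_append, ← hw]
    exact isCycleList_cycleList σ p
  rw [hcycle.split_swap_mul.1.sameCycle_iff (by simp)]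
  exact fun hmem => hcycle.nodup.disjoint hmem (by simp)

end SwapCycles

/-! ### Genus of a pair of permutations -/

section Classes

variable {D : Type*} {r r' : D → D → Prop} {p q : D}

/-- The number of classes of the equivalence relation generated by `r`; an integer, so that the
genus below involves no truncated subtraction. -/
noncomputable def numClasses (r : D → D → Prop) : ℤ := Nat.card (Quot r)

/-- The relation `r` with `p` and `q` glued together. -/
def glue (r : D → D → Prop) (p q : D) : D → D → Prop := fun a b => r a b ∨ a = p ∧ b = q

lemma glue_of_rel {a b : D} (h : r a b) : Quot.mk (glue r p q) a = Quot.mk (glue r p q) b :=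
  Quot.sound (Or.inl h)

lemma glue_left_eq_right : Quot.mk (glue r p q) p = Quot.mk (glue r p q) q :=
  Quot.sound (Or.inr ⟨rfl, rfl⟩)

lemma mk_eq_of_sameCycle [Finite D] {σ : Perm D} (hr : ∀ a, Quot.mk r (σ a) = Quot.mk r a)
    (h : σ.SameCycle p q) : Quot.mk r p = Quot.mk r q := by
  obtain ⟨i, rfl⟩ := h.exists_nat_pow_eq
  rw [← Perm.iterate_eq_pow]
  exact (congrFun (iterate_invariant (g := Quot.mk r) (funext hr) i) p).symm

variable [Finite D]

lemma numClasses_le_of_mk_eq (h : ∀ a b, r a b → Quot.mk r' a = Quot.mk r' b) :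
    numClasses r' ≤ numClasses r := by
  have hsurj : Surjective (Quot.lift (Quot.mk r') h) := by
    rintro ⟨a⟩
    exact ⟨Quot.mk r a, rfl⟩
  exact Nat.cast_le.2 (Nat.card_le_card_of_surjective _ hsurj)

lemma numClasses_glue_le : numClasses (glue r p q) ≤ numClasses r :=
  numClasses_le_of_mk_eq fun _ _ => glue_of_rel

lemma numClasses_glue_of_mk_eq (h : Quot.mk r p = Quot.mk r q) :
    numClasses (glue r p q) = numClasses r := by
  refine numClasses_glue_le.antisymm (numClasses_le_of_mk_eq ?_)
  rintro a b (hab | ⟨rfl, rfl⟩)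
  exacts [Quot.sound hab, h]

lemma numClasses_le_glue_add_one : numClasses r ≤ numClasses (glue r p q) + 1 := by
  classical
  let f (a : D) : Quot r := if Quot.mk r a = Quot.mk r p then Quot.mk r q else Quot.mk r a
  have hf : ∀ a b, glue r p q a b → f a = f b := by
    rintro a b (h | ⟨rfl, rfl⟩)
    · simp only [f, Quot.sound h]
    · simp [f]
  let F (o : Option (Quot (glue r p q))) : Quot r := o.elim (Quot.mk r p) (Quot.lift f hf)
  have hF : Surjective F := by
    rintro ⟨a⟩
    by_cases h : Quot.mk r a = Quot.mk r p
    · exact ⟨none, h.symm⟩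
    · exact ⟨some (Quot.mk _ a), by simp [F, f, h]⟩
  have hcard := Nat.card_le_card_of_surjective _ hF
  rw [Finite.card_option] at hcard
  unfold numClasses
  exact_mod_cast hcard

lemma numClasses_glue_of_mk_ne (h : Quot.mk r p ≠ Quot.mk r q) :
    numClasses (glue r p q) = numClasses r - 1 := by
  let f : Quot r → Quot (glue r p q) := Quot.lift (Quot.mk _) fun _ _ => glue_of_rel
  have hsurj : Surjective f := by
    rintro ⟨a⟩
    exact ⟨Quot.mk r a, rfl⟩
  have hcard : Nat.card (Quot r) ≠ Nat.card (Quot (glue r p q)) := fun hcard =>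
    h (((Nat.bijective_iff_surjective_and_card f).2 ⟨hsurj, hcard⟩).1 glue_left_eq_right)
  have hle := numClasses_glue_le (r := r) (p := p) (q := q)
  have hge := numClasses_le_glue_add_one (r := r) (p := p) (q := q)
  unfold numClasses at *
  omega

end Classes

section Orbits

variable {D : Type*} {φ σ : Perm D} {p q : D}

/-- The relation whose classes are the orbits of the group generated by `φ` and `σ`. -/
def Step (φ σ : Perm D) : D → D → Prop := fun a b => φ a = b ∨ σ a = b

/-- The number of orbits of the group generated by `φ` and `σ`. -/
noncomputable def numOrbits (φ σ : Perm D) : ℤ := numClasses (Step φ σ)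

/-- The number of cycles of `σ`, fixed points included. -/
noncomputable def numCycles (σ : Perm D) : ℤ := numOrbits σ 1

lemma mk_step_left (φ σ : Perm D) (a : D) :
    Quot.mk (Step φ σ) (φ a) = Quot.mk (Step φ σ) a :=
  (Quot.sound (r := Step φ σ) (Or.inl rfl)).symm

lemma mk_step_right (φ σ : Perm D) (a : D) :
    Quot.mk (Step φ σ) (σ a) = Quot.mk (Step φ σ) a :=
  (Quot.sound (r := Step φ σ) (Or.inr rfl)).symm

lemma mk_step_mul (φ σ : Perm D) (a : D) :
    Quot.mk (Step φ σ) ((φ * σ) a) = Quot.mk (Step φ σ) a := by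
  rw [Perm.mul_apply, mk_step_left, mk_step_right]

lemma mk_step_eq_of_sameCycle [Finite D] (h : φ.SameCycle p q ∨ (φ * σ).SameCycle p q) :
    Quot.mk (Step φ σ) p = Quot.mk (Step φ σ) q :=
  h.elim (mk_eq_of_sameCycle (mk_step_left φ σ)) (mk_eq_of_sameCycle (mk_step_mul φ σ))

lemma mk_step_one_eq_iff [Finite D] :
    Quot.mk (Step σ 1) p = Quot.mk (Step σ 1) q ↔ σ.SameCycle p q := by
  refine ⟨fun h => ?_, fun h => mk_step_eq_of_sameCycle (Or.inl h)⟩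
  have hstep : ∀ a b, Step σ 1 a b → σ.SameCycle a b := by
    rintro a b (rfl | rfl)
    exacts [⟨1, by simp⟩, Perm.SameCycle.refl σ a]
  exact (Quot.eqvGen_exact h).rec hstep (fun a => .refl σ a) (fun _ _ _ => .symm)
    fun _ _ _ _ _ => .trans

lemma numOrbits_comm (φ σ : Perm D) : numOrbits φ σ = numOrbits σ φ := by
  have hstep : Step φ σ = Step σ φ := funext₂ fun _ _ => propext or_comm
  rw [numOrbits, numOrbits, hstep]

variable [Finite D]

lemma numOrbits_self (φ : Perm D) : numOrbits φ φ = numCycles φ := by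
  refine le_antisymm (numClasses_le_of_mk_eq ?_) (numClasses_le_of_mk_eq ?_)
  · rintro a _ (rfl | rfl)
    exacts [(mk_step_left φ φ a).symm, rfl]
  · rintro a _ (rfl | rfl) <;> exact (mk_step_left φ 1 a).symm

lemma numCycles_one : numCycles (1 : Perm D) = Nat.card D := by
  have hbij : Bijective (Quot.mk (Step (1 : Perm D) 1)) :=
    ⟨fun a b h => by simpa using mk_step_one_eq_iff.1 h, Quot.mk_surjective⟩
  exact congrArg Nat.cast (Nat.card_eq_of_bijective _ hbij).symm

lemma numCycles_mul_comm (φ σ : Perm D) : numCycles (φ * σ) = numCycles (σ * φ) := by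
  have hle (φ σ : Perm D) : numCycles (φ * σ) ≤ numCycles (σ * φ) := by
    have hφ : ∀ a b, Step (σ * φ) 1 a b →
        Quot.mk (Step (φ * σ) 1) (φ a) = Quot.mk (Step (φ * σ) 1) (φ b) := by
      rintro a b (rfl | rfl)
      exacts [Quot.sound (Or.inl rfl), rfl]
    have hsurj : Surjective (Quot.lift (fun a => Quot.mk (Step (φ * σ) 1) (φ a)) hφ) := by
      rintro ⟨a⟩
      exact ⟨Quot.mk _ (φ⁻¹ a), by simp⟩
    exact Nat.cast_le.2 (Nat.card_le_card_of_surjective _ hsurj)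
  exact (hle φ σ).antisymm (hle σ φ)

variable [DecidableEq D]

lemma numClasses_glue_swap_mul (φ σ : Perm D) (p q : D) :
    numClasses (glue (Step (swap p q * φ) σ) p q) = numClasses (glue (Step φ σ) p q) := by
  have hle (φ : Perm D) : numClasses (glue (Step φ σ) p q) ≤
      numClasses (glue (Step (swap p q * φ) σ) p q) := by
    refine numClasses_le_of_mk_eq ?_
    rintro a b ((rfl | rfl) | ⟨rfl, rfl⟩)
    · have hφ : Quot.mk (glue (Step φ σ) p q) a = Quot.mk (glue (Step φ σ) p q) (φ a) :=
        glue_of_rel (Or.inl rfl)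
      rw [hφ, Perm.mul_apply, swap_apply_def]
      split_ifs with hp hq
      exacts [hp ▸ glue_left_eq_right, hq ▸ glue_left_eq_right.symm, rfl]
    · exact glue_of_rel (Or.inr rfl)
    · exact glue_left_eq_right
  refine le_antisymm ?_ (hle φ)
  simpa [← mul_assoc] using hle (swap p q * φ)

lemma numCycles_swap_mul_ge (σ : Perm D) (p q : D) :
    numCycles σ - 1 ≤ numCycles (swap p q * σ) := by
  have hge := numClasses_le_glue_add_one (r := Step σ 1) (p := p) (q := q)
  have hle := numClasses_glue_le (r := Step (swap p q * σ) 1) (p := p) (q := q)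
  rw [numClasses_glue_swap_mul] at hle
  unfold numCycles numOrbits
  omega

lemma numCycles_swap_mul_of_sameCycle (hpq : p ≠ q) (h : σ.SameCycle p q) :
    numCycles (swap p q * σ) = numCycles σ + 1 := by
  have hcut := numClasses_glue_of_mk_ne (mk_step_one_eq_iff.not.2 (not_sameCycle_swap_mul hpq h))
  rw [numClasses_glue_swap_mul, numClasses_glue_of_mk_eq (mk_step_one_eq_iff.2 h)] at hcut
  unfold numCycles numOrbits
  omega

lemma numOrbits_swap_mul_le_add_one (φ σ : Perm D) (p q : D) :
    numOrbits (swap p q * φ) σ ≤ numOrbits φ σ + 1 := by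
  have hge := numClasses_le_glue_add_one (r := Step (swap p q * φ) σ) (p := p) (q := q)
  have hle := numClasses_glue_le (r := Step φ σ) (p := p) (q := q)
  rw [numClasses_glue_swap_mul] at hge
  unfold numOrbits
  omega

lemma numOrbits_swap_mul_of_not_sameCycle
    (h : ¬ φ.SameCycle p q ∨ ¬ (φ * σ).SameCycle p q) :
    numOrbits (swap p q * φ) σ = numClasses (glue (Step φ σ) p q) := by
  have hmk : Quot.mk (Step (swap p q * φ) σ) p = Quot.mk (Step (swap p q * φ) σ) q :=
    mk_step_eq_of_sameCycle (h.imp sameCycle_swap_mul fun h => mul_assoc (swap p q) φ σ ▸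
      sameCycle_swap_mul h)
  rw [numOrbits, ← numClasses_glue_of_mk_eq hmk, numClasses_glue_swap_mul]

lemma numOrbits_swap_mul_le (h : ¬ φ.SameCycle p q ∨ ¬ (φ * σ).SameCycle p q) :
    numOrbits (swap p q * φ) σ ≤ numOrbits φ σ :=
  (numOrbits_swap_mul_of_not_sameCycle h).trans_le numClasses_glue_le

lemma numOrbits_swap_mul_of_mk_ne (h : Quot.mk (Step φ σ) p ≠ Quot.mk (Step φ σ) q) :
    numOrbits (swap p q * φ) σ = numOrbits φ σ - 1 :=
  (numOrbits_swap_mul_of_not_sameCycle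
    (Or.inl fun hφ => h (mk_step_eq_of_sameCycle (Or.inl hφ)))).trans (numClasses_glue_of_mk_ne h)

end Orbits

section Genus

variable {D : Type*} {φ σ : Perm D} {p q : D}

/-- Twice the total genus of the closed surface obtained by glueing polygons with sides `D`: the
cycles of `φ` are the polygons, those of `σ` the edges and those of `φ * σ` the vertices. -/
noncomputable def doubleGenus (φ σ : Perm D) : ℤ :=
  2 * numOrbits φ σ + Nat.card D - numCycles φ - numCycles σ - numCycles (φ * σ)

variable [Finite D]

lemma doubleGenus_comm (φ σ : Perm D) : doubleGenus φ σ = doubleGenus σ φ := by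
  rw [doubleGenus, doubleGenus, numOrbits_comm, numCycles_mul_comm]
  ring

lemma doubleGenus_one (σ : Perm D) : doubleGenus 1 σ = 0 := by
  rw [doubleGenus, numOrbits_comm, one_mul, numCycles_one, numCycles]
  ring

lemma doubleGenus_self_of_mul_self_eq_one (h : φ * φ = 1) : doubleGenus φ φ = 0 := by
  rw [doubleGenus, numOrbits_self, h, numCycles_one]
  ring

lemma doubleGenus_swap_mul_le [DecidableEq D] (h : φ.SameCycle p q ∨ (φ * σ).SameCycle p q) :
    doubleGenus (swap p q * φ) σ ≤ doubleGenus φ σ := by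
  rcases eq_or_ne p q with rfl | hpq
  · rw [swap_self, ← Perm.one_def, one_mul]
  have hface := numCycles_swap_mul_ge φ p q
  have hvertex := numCycles_swap_mul_ge (φ * σ) p q
  simp only [doubleGenus, mul_assoc]
  by_cases hφ : φ.SameCycle p q
  · have hface' := numCycles_swap_mul_of_sameCycle hpq hφ
    by_cases hφσ : (φ * σ).SameCycle p q
    · have hvertex' := numCycles_swap_mul_of_sameCycle hpq hφσ
      have horbit := numOrbits_swap_mul_le_add_one φ σ p q
      omega
    · have horbit := numOrbits_swap_mul_le (Or.inr hφσ)
      omega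
  · have hvertex' := numCycles_swap_mul_of_sameCycle hpq (h.resolve_left hφ)
    have horbit := numOrbits_swap_mul_le (σ := σ) (Or.inl hφ)
    omega

lemma doubleGenus_swap_mul_le_add_two [DecidableEq D] (φ σ : Perm D) (p q : D) :
    doubleGenus (swap p q * φ) σ ≤ doubleGenus φ σ + 2 := by
  by_cases h : φ.SameCycle p q
  · linarith [doubleGenus_swap_mul_le (σ := σ) (Or.inl h)]
  have hface := numCycles_swap_mul_ge φ p q
  have hvertex := numCycles_swap_mul_ge (φ * σ) p q
  have horbit := numOrbits_swap_mul_le (σ := σ) (Or.inl h)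
  simp only [doubleGenus, mul_assoc]
  omega

lemma doubleGenus_swap_mul_le_of_mk_ne [DecidableEq D]
    (h : Quot.mk (Step φ σ) p ≠ Quot.mk (Step φ σ) q) :
    doubleGenus (swap p q * φ) σ ≤ doubleGenus φ σ := by
  have hface := numCycles_swap_mul_ge φ p q
  have hvertex := numCycles_swap_mul_ge (φ * σ) p q
  have horbit := numOrbits_swap_mul_of_mk_ne h
  simp only [doubleGenus, mul_assoc]
  omega

/-- Untangling `φ` by transpositions does not raise the genus, and in the end `φ = 1`. -/
lemma doubleGenus_nonneg (φ σ : Perm D) : 0 ≤ doubleGenus φ σ := by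
  classical
  cases nonempty_fintype D
  induction hn : φ.support.card using Nat.strong_induction_on generalizing φ with
  | _ n ih =>
    rcases eq_or_ne φ 1 with rfl | hφ
    · exact (doubleGenus_one σ).ge
    obtain ⟨x, hx⟩ : ∃ x, φ x ≠ x := by
      by_contra! hfix
      exact hφ (Perm.ext hfix)
    exact (ih _ (hn ▸ Perm.card_support_swap_mul hx) _ rfl).trans
      (doubleGenus_swap_mul_le (Or.inl ⟨1, by simp⟩))

end Genus

section Sum

variable {D D₁ D₂ : Type*} [Finite D₁] [Finite D₂] {φ σ : Perm D}
  {φ₁ σ₁ : Perm D₁} {φ₂ σ₂ : Perm D₂}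

lemma numClasses_of_sum (E : D₁ ⊕ D₂ ≃ D) {r : D → D → Prop} {r₁ : D₁ → D₁ → Prop}
    {r₂ : D₂ → D₂ → Prop} (h : ∀ u v, r (E u) (E v) ↔ Sum.LiftRel r₁ r₂ u v) :
    numClasses r = numClasses r₁ + numClasses r₂ := by
  let f : Quot r ≃ Quot r₁ ⊕ Quot r₂ :=
    { toFun := Quot.lift (fun d => Sum.map (Quot.mk r₁) (Quot.mk r₂) (E.symm d)) (by
        intro a b hab
        obtain ⟨u, rfl⟩ := E.surjective a
        obtain ⟨v, rfl⟩ := E.surjective b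
        rw [h] at hab
        cases hab with
        | inl h => simp [Quot.sound h]
        | inr h => simp [Quot.sound h])
      invFun := Sum.elim
        (Quot.lift (fun a => Quot.mk r (E (Sum.inl a)))
          fun _ _ hab => Quot.sound ((h _ _).2 (Sum.LiftRel.inl hab)))
        (Quot.lift (fun a => Quot.mk r (E (Sum.inr a)))
          fun _ _ hab => Quot.sound ((h _ _).2 (Sum.LiftRel.inr hab)))
      left_inv := by
        rintro ⟨d⟩
        obtain ⟨u | u, rfl⟩ := E.surjective d <;> simp
      right_inv := by
        rintro (d | d) <;> induction d using Quot.ind <;> simp }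
  rw [numClasses, Nat.card_congr f, Nat.card_sum, Nat.cast_add, numClasses, numClasses]

lemma numOrbits_of_sum (E : D₁ ⊕ D₂ ≃ D) (hφ : ∀ u, φ (E u) = E (Sum.map φ₁ φ₂ u))
    (hσ : ∀ u, σ (E u) = E (Sum.map σ₁ σ₂ u)) :
    numOrbits φ σ = numOrbits φ₁ σ₁ + numOrbits φ₂ σ₂ :=
  numClasses_of_sum E <| by
    rintro (u | u) (v | v) <;> simp [Step, hφ, hσ]

lemma doubleGenus_of_sum (E : D₁ ⊕ D₂ ≃ D) (hφ : ∀ u, φ (E u) = E (Sum.map φ₁ φ₂ u))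
    (hσ : ∀ u, σ (E u) = E (Sum.map σ₁ σ₂ u)) :
    doubleGenus φ σ = doubleGenus φ₁ σ₁ + doubleGenus φ₂ σ₂ := by
  have hone (u : D₁ ⊕ D₂) : (1 : Perm D) (E u) = E (Sum.map (1 : Perm D₁) (1 : Perm D₂) u) := by
    rcases u with u | u <;> rfl
  have hmul (u : D₁ ⊕ D₂) : (φ * σ) (E u) = E (Sum.map (φ₁ * σ₁) (φ₂ * σ₂) u) := by
    rw [Perm.mul_apply, hσ, hφ, Sum.map_map]
    rfl
  have hcard : Nat.card D = Nat.card D₁ + Nat.card D₂ := by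
    rw [← Nat.card_congr E, Nat.card_sum]
  simp only [doubleGenus, numCycles, numOrbits_of_sum E hφ hσ, numOrbits_of_sum E hφ hone,
    numOrbits_of_sum E hσ hone, numOrbits_of_sum E hmul hone, hcard]
  push_cast
  ring

end Sum

/-! ### Diagrams -/

section Diagrams

variable {S K D : Type*} [MulAction (FreeGroup S) K]

/-- A closed surface glued from polygons, carrying a combinatorial map to a complex with vertex set
`K`. The sides `D` are directed; the cycles of `face` are the polygons, `edge` pairs each side with
its reverse, `label d` is the letter read along `d` and `base d` is the image of the initial vertex
of `d`. -/
structure Diagram (S K D : Type*) [MulAction (FreeGroup S) K] where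
  face : Perm D
  edge : Perm D
  label : D → S × Bool
  base : D → K
  edge_mul_edge : edge * edge = 1
  edge_ne : ∀ d, edge d ≠ d
  label_edge : ∀ d, label (edge d) = ((label d).1, !(label d).2)
  base_face : ∀ d, base (face d) = (FreeGroup.mk [label d])⁻¹ • base d
  base_edge : ∀ d, base (edge d) = (FreeGroup.mk [label d])⁻¹ • base d

namespace Diagram

variable (M : Diagram S K D) {d d₁ d₂ x y : D} {u v : List (S × Bool)}

/-- The boundary word of the polygon of `d`, read from `d` on. -/
noncomputable def word (d : D) : List (S × Bool) := (cycleList M.face d).map M.label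

/-- Twice the genus of the surface. -/
noncomputable def doubleGenus : ℤ := SmallCancellation.doubleGenus M.face M.edge

@[simp]
lemma edge_edge (d : D) : M.edge (M.edge d) = d :=
  congrArg (· d) M.edge_mul_edge

lemma base_iterate_face (d : D) (n : ℕ) : M.base (M.face^[n] d) =
    (FreeGroup.mk ((List.iterate M.face d n).map M.label))⁻¹ • M.base d := by
  induction n generalizing d with
  | zero => exact (inv_one (G := FreeGroup S) ▸ one_smul (FreeGroup S) (M.base d)).symm
  | succ n ih =>
    rw [iterate_succ_apply, ih, base_face, smul_smul, ← mul_inv_rev, FreeGroup.mul_mk]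
    rfl

lemma mk_word_smul_base (d : D) : FreeGroup.mk (M.word d) • M.base d = M.base d := by
  have h := M.base_iterate_face d (minimalPeriod M.face d)
  rw [iterate_minimalPeriod, eq_inv_smul_iff] at h
  exact h

lemma base_of_cycleList_eq {l l' : List D} (h : cycleList M.face d = l ++ y :: l') :
    M.base y = (FreeGroup.mk (l.map M.label))⁻¹ • M.base d := by
  have hlen : l.length < (cycleList M.face d).length := by simp [h]
  have hy : y = M.face^[l.length] d := by
    rw [← getElem_cycleList hlen]
    simp [h]
  have hl : l = List.iterate M.face d l.length := by
    refine List.ext_getElem (by simp) fun i hi _ => ?_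
    rw [List.getElem_iterate, ← getElem_cycleList (hi.trans hlen)]
    simp [h, hi]
  rw [hy, base_iterate_face, ← hl]

lemma exists_cycleList_of_word_eq (h : M.word d = u ++ v) (hv : v ≠ []) :
    ∃ (l : List D) (y : D) (l' : List D), cycleList M.face d = l ++ y :: l' ∧
      l.map M.label = u ∧ (y :: l').map M.label = v := by
  obtain ⟨l, m, hlm, rfl, rfl⟩ := List.map_eq_append_iff.1 h
  obtain ⟨y, l', rfl⟩ := List.exists_cons_of_ne_nil (by simpa using hv)
  exact ⟨l, y, l', hlm, rfl, rfl⟩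

variable [Finite D]

lemma word_ne_nil (d : D) : M.word d ≠ [] := by
  simpa only [word, ne_eq, List.map_eq_nil_iff] using (isCycleList_cycleList M.face d).ne_nil

lemma exists_word_eq_append_comm (h : M.word d = u ++ v) (hv : v ≠ []) :
    ∃ y, M.face.SameCycle d y ∧ M.word y = v ++ u ∧
      M.base y = (FreeGroup.mk u)⁻¹ • M.base d := by
  obtain ⟨l, y, l', hcycle, rfl, rfl⟩ := M.exists_cycleList_of_word_eq h hv
  have hl : IsCycleList M.face (y :: (l' ++ l)) :=
    (hcycle ▸ isCycleList_cycleList M.face d).rotate_append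
  refine ⟨y, mem_cycleList.1 (by simp [hcycle]), ?_, M.base_of_cycleList_eq hcycle⟩
  rw [word, hl.cycleList_eq, ← List.map_append, List.cons_append]

lemma exists_word_eq_append_comm_of_sameCycle (h : M.face.SameCycle d x) :
    ∃ u v, M.word d = u ++ v ∧ M.word x = v ++ u ∧
      M.base x = (FreeGroup.mk u)⁻¹ • M.base d := by
  obtain ⟨l, l', hd, hx⟩ := cycleList_eq_append h
  refine ⟨l.map M.label, (x :: l').map M.label, ?_, ?_, M.base_of_cycleList_eq hd⟩
  · rw [word, hd, List.map_append]
  · rw [word, hx, List.map_append]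

variable [DecidableEq D]

/-- Exchange the predecessors of two sides that start at the same point: this joins two polygons at
a corner, or cuts one polygon along a diagonal. -/
@[simps]
def splice (d₁ d₂ : D) (h : M.base d₁ = M.base d₂) : Diagram S K D where
  face := swap d₁ d₂ * M.face
  edge := M.edge
  label := M.label
  base := M.base
  edge_mul_edge := M.edge_mul_edge
  edge_ne := M.edge_ne
  label_edge := M.label_edge
  base_edge := M.base_edge
  base_face d := by
    rw [← M.base_face, Perm.mul_apply, swap_apply_def]
    split_ifs with h₁ h₂
    exacts [h₁ ▸ h.symm, h₂ ▸ h, rfl]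

variable {M} {h : M.base d₁ = M.base d₂}

lemma cycleList_splice_of_notMem (hd₁ : ¬ M.face.SameCycle d₁ x) (hd₂ : ¬ M.face.SameCycle d₂ x) :
    cycleList (M.splice d₁ d₂ h).face x = cycleList M.face x := by
  obtain ⟨t, ht⟩ := cycleList_eq_cons M.face x
  rw [Perm.sameCycle_comm, ← mem_cycleList] at hd₁ hd₂
  have hx := (isCycleList_cycleList M.face x).swap_mul_of_notMem hd₁ hd₂
  rw [ht] at hx ⊢
  exact hx.cycleList_eq

lemma cycleList_splice_of_not_sameCycle (hd : ¬ M.face.SameCycle d₁ d₂) :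
    cycleList (M.splice d₁ d₂ h).face d₁ = cycleList M.face d₁ ++ cycleList M.face d₂ := by
  obtain ⟨t₁, ht₁⟩ := cycleList_eq_cons M.face d₁
  obtain ⟨t₂, ht₂⟩ := cycleList_eq_cons M.face d₂
  have hdisj := disjoint_cycleList hd
  rw [ht₁, ht₂] at hdisj ⊢
  exact IsCycleList.cycleList_eq ((ht₁ ▸ isCycleList_cycleList M.face d₁).append_swap_mul
    (ht₂ ▸ isCycleList_cycleList M.face d₂) hdisj)

lemma word_splice_of_not_sameCycle (hd : ¬ M.face.SameCycle d₁ d₂) :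
    (M.splice d₁ d₂ h).word d₁ = M.word d₁ ++ M.word d₂ := by
  rw [word, cycleList_splice_of_not_sameCycle hd, List.map_append]
  rfl

lemma exists_splice_cut (hd : M.word d = u ++ v) (hu : u ≠ []) (hv : v ≠ []) :
    ∃ y, M.face.SameCycle d y ∧ M.base y = (FreeGroup.mk u)⁻¹ • M.base d ∧
      ∀ h : M.base d = M.base y, (M.splice d y h).word d = u ∧ (M.splice d y h).word y = v ∧
        cycleList M.face d =
          cycleList (M.splice d y h).face d ++ cycleList (M.splice d y h).face y := by
  obtain ⟨l, y, l', hcycle, rfl, rfl⟩ := M.exists_cycleList_of_word_eq hd hv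
  obtain ⟨t, ht⟩ := cycleList_eq_cons M.face d
  obtain ⟨c, l, rfl⟩ := List.exists_cons_of_ne_nil (by simpa using hu)
  obtain rfl : d = c := (List.cons.inj (ht.symm.trans hcycle)).1
  obtain ⟨hl, hl'⟩ := (hcycle ▸ isCycleList_cycleList M.face d).split_swap_mul
  refine ⟨y, mem_cycleList.1 (by simp [hcycle]), M.base_of_cycleList_eq hcycle, fun h => ?_⟩
  have hd : cycleList (M.splice d y h).face d = d :: l := hl.cycleList_eq
  have hy : cycleList (M.splice d y h).face y = y :: l' := hl'.cycleList_eq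
  simp only [word, hd, hy, hcycle]
  exact ⟨rfl, rfl, trivial⟩

lemma doubleGenus_splice_le (hd : M.face.SameCycle d₁ d₂ ∨ (M.face * M.edge).SameCycle d₁ d₂) :
    (M.splice d₁ d₂ h).doubleGenus ≤ M.doubleGenus :=
  doubleGenus_swap_mul_le hd

lemma doubleGenus_splice_le_add_two : (M.splice d₁ d₂ h).doubleGenus ≤ M.doubleGenus + 2 :=
  doubleGenus_swap_mul_le_add_two ..

end Diagram

end Diagrams

section RelatorWords

variable {S : Type*} {R : Set (FreeGroup S)} {p u v w : List (S × Bool)}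

/-- The reduced words of the elements of `R`. -/
def relatorWords (R : Set (FreeGroup S)) : Set (List (S × Bool)) :=
  {w | FreeGroup.IsReduced w ∧ FreeGroup.mk w ∈ R}

lemma mk_mem_normalClosure (hw : w ∈ relatorWords R) :
    FreeGroup.mk w ∈ Subgroup.normalClosure R :=
  Subgroup.subset_normalClosure hw.2

lemma eq_of_mk_eq (hu : FreeGroup.IsReduced u) (hv : FreeGroup.IsReduced v)
    (h : FreeGroup.mk u = FreeGroup.mk v) : u = v := by
  classical
  rw [← hu.reduce_eq, ← hv.reduce_eq, FreeGroup.reduce.sound h]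

lemma mk_ne_one (hw : FreeGroup.IsReduced w) (hne : w ≠ []) : FreeGroup.mk w ≠ 1 :=
  fun h => hne (eq_of_mk_eq hw .nil h)

variable [DecidableEq S]

lemma len_mk (hw : FreeGroup.IsReduced w) : FG.len (FreeGroup.mk w) = w.length := by
  rw [FG.len, FreeGroup.toWord_mk, hw.reduce_eq]

lemma len_mk_append (h : FreeGroup.IsReduced (u ++ v)) : FG.len (FreeGroup.mk (u ++ v)) =
    FG.len (FreeGroup.mk u) + FG.len (FreeGroup.mk v) := by
  rw [len_mk h, len_mk (List.IsChain.left_of_append h), len_mk (List.IsChain.right_of_append h),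
    List.length_append]

lemma isReduced_of_length_le_len (h : w.length ≤ FG.len (FreeGroup.mk w)) :
    FreeGroup.IsReduced w := by
  rw [FG.len, FreeGroup.toWord_mk] at h
  exact .of_reduce_eq (FreeGroup.reduce.red.sublist.eq_of_length_le h)

lemma ne_nil_of_mem_relatorWords (hR : FG.Symmetrized R) (hw : w ∈ relatorWords R) : w ≠ [] := by
  rintro rfl
  exact (hR.1 _ hw.2).1 rfl

lemma append_comm_mem_relatorWords (hR : FG.Symmetrized R) (h : u ++ v ∈ relatorWords R) :
    v ++ u ∈ relatorWords R := by
  obtain ⟨hred, hmem⟩ := h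
  have hconj : (FreeGroup.mk u)⁻¹ * FreeGroup.mk (u ++ v) * FreeGroup.mk u =
      FreeGroup.mk (v ++ u) := by
    rw [← FreeGroup.mul_mk, ← FreeGroup.mul_mk, inv_mul_cancel_left]
  refine ⟨isReduced_of_length_le_len ?_, ?_⟩
  · have hle := (hR.1 _ hmem).2 (FreeGroup.mk u)
    rwa [hconj, len_mk hred, List.length_append, add_comm, ← List.length_append] at hle
  · rw [← FreeGroup.mul_mk]
    exact hR.2.2 _ hmem _ _ FreeGroup.mul_mk.symm (len_mk_append hred)

lemma invRev_mem_relatorWords (hR : FG.Symmetrized R) (h : w ∈ relatorWords R) :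
    FreeGroup.invRev w ∈ relatorWords R := by
  refine ⟨.of_reduce_eq ?_, FreeGroup.inv_mk ▸ hR.2.1 _ h.2⟩
  rw [FreeGroup.reduce_invRev, h.1.reduce_eq]

lemma six_mul_length_lt (hC : FG.CPrimeSixth R) (hp : p ≠ []) (hu : p ++ u ∈ relatorWords R)
    (hv : p ++ v ∈ relatorWords R) (huv : u ≠ v) : 6 * p.length < (p ++ u).length := by
  have hpred : FreeGroup.IsReduced p := List.IsChain.left_of_append hu.1
  have hpiece : FG.IsPiece R (FreeGroup.mk p) := by
    refine ⟨mk_ne_one hpred hp, _, hu.2, _, hv.2, fun h => huv ?_,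
      ⟨_, FreeGroup.mul_mk.symm, len_mk_append hu.1⟩,
      ⟨_, FreeGroup.mul_mk.symm, len_mk_append hv.1⟩⟩
    exact List.append_cancel_left (eq_of_mk_eq hu.1 hv.1 h)
  have hlt := hC _ hu.2 _ _ hpiece FreeGroup.mul_mk.symm (len_mk_append hu.1)
  rwa [len_mk hpred, len_mk hu.1] at hlt

end RelatorWords

section Semiconj

variable {D D' : Type*} {σ : Perm D} {σ' : Perm D'} {f : D' → D}

lemma cycleList_of_semiconj (hf : Injective f) (h : Semiconj f σ' σ) (d : D') :
    cycleList σ (f d) = (cycleList σ' d).map f := by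
  have hper : minimalPeriod σ (f d) = minimalPeriod σ' d :=
    minimalPeriod_eq_minimalPeriod_iff.2 fun n => by
      rw [IsPeriodicPt, IsFixedPt, ← (h.iterate_right n).eq, hf.eq_iff, IsPeriodicPt, IsFixedPt]
  refine List.ext_getElem (by simp [length_cycleList, hper]) fun i _ _ => ?_
  rw [getElem_cycleList, List.getElem_map, getElem_cycleList, (h.iterate_right i).eq]

end Semiconj

/-! ### Areas -/

section Area

variable {S K D : Type*} [MulAction (FreeGroup S) K] {R : Set (FreeGroup S)}

/-- An area for the consequences of the relators `R`, read as loops in a complex with vertex set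
`K`: additive for loops with the same base point, and independent of the base point. -/
structure AreaForm (R : Set (FreeGroup S)) (K : Type*) [MulAction (FreeGroup S) K] where
  toFun : K → FreeGroup S → ℚ
  smul_eq_self : ∀ k : K, ∀ n ∈ Subgroup.normalClosure R, n • k = k
  map_mul : ∀ k, ∀ m ∈ Subgroup.normalClosure R, ∀ n ∈ Subgroup.normalClosure R,
    toFun k (m * n) = toFun k m + toFun k n
  map_conj : ∀ k g, ∀ n ∈ Subgroup.normalClosure R, toFun (g • k) (g * n * g⁻¹) = toFun k n

namespace AreaForm

variable (Ψ : AreaForm R K) (k : K)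

lemma map_one : Ψ.toFun k 1 = 0 := by
  simpa using Ψ.map_mul k 1 (one_mem _) 1 (one_mem _)

lemma map_inv {n : FreeGroup S} (hn : n ∈ Subgroup.normalClosure R) :
    Ψ.toFun k n⁻¹ = -Ψ.toFun k n := by
  have h := Ψ.map_mul k n⁻¹ (inv_mem hn) n hn
  rw [inv_mul_cancel, map_one] at h
  exact eq_neg_of_add_eq_zero_left h.symm

end AreaForm

namespace Diagram

variable (M : Diagram S K D) (Ψ : AreaForm R K) {d x : D}

/-- The area of the polygon of `d`, shared equally among its sides. -/
noncomputable def area (d : D) : ℚ :=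
  Ψ.toFun (M.base d) (FreeGroup.mk (M.word d)) / (M.word d).length

section Semiconj

variable {D' : Type*} {M} {M' : Diagram S K D'} {f : D' → D}

lemma word_of_semiconj (hf : Injective f) (hface : Semiconj f M'.face M.face)
    (hlabel : ∀ d, M.label (f d) = M'.label d) (d : D') : M.word (f d) = M'.word d := by
  rw [word, cycleList_of_semiconj hf hface, List.map_map]
  exact List.map_congr_left fun x _ => hlabel x

end Semiconj

lemma area_of_sameCycle [Finite D] (hd : FreeGroup.mk (M.word d) ∈ Subgroup.normalClosure R)
    (h : M.face.SameCycle d x) : M.area Ψ x = M.area Ψ d := by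
  obtain ⟨u, v, hu, hv, hx⟩ := M.exists_word_eq_append_comm_of_sameCycle h
  have hconj : FreeGroup.mk (v ++ u) =
      (FreeGroup.mk u)⁻¹ * FreeGroup.mk (u ++ v) * (FreeGroup.mk u)⁻¹⁻¹ := by
    rw [← FreeGroup.mul_mk, ← FreeGroup.mul_mk, inv_mul_cancel_left, inv_inv]
  rw [area, area, hx, hv, hconj, Ψ.map_conj _ _ _ (hu ▸ hd), hu, List.length_append,
    List.length_append, add_comm]

variable [DecidableEq D]

lemma sum_area_cycleList [Finite D] (hd : FreeGroup.mk (M.word d) ∈ Subgroup.normalClosure R) :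
    ∑ x ∈ (cycleList M.face d).toFinset, M.area Ψ x =
      Ψ.toFun (M.base d) (FreeGroup.mk (M.word d)) := by
  have hlen : (M.word d).length ≠ 0 := by simpa using M.word_ne_nil d
  rw [Finset.sum_congr rfl fun x hx =>
    M.area_of_sameCycle Ψ hd (mem_cycleList.1 (List.mem_toFinset.1 hx)), Finset.sum_const,
    List.toFinset_card_of_nodup (isCycleList_cycleList M.face d).nodup, nsmul_eq_mul, area,
    ← List.length_map (f := M.label), ← word, mul_div_cancel₀ _ (Nat.cast_ne_zero.2 hlen)]

variable [Fintype D]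

/-- The total area of the polygons other than that of `d`. -/
noncomputable def restArea (d : D) : ℚ := ∑ x with x ∉ cycleList M.face d, M.area Ψ x

variable {M} {Ψ}

lemma restArea_of_sameCycle (h : M.face.SameCycle d x) : M.restArea Ψ x = M.restArea Ψ d :=
  Finset.sum_congr (Finset.filter_congr fun _ _ => not_congr (mem_cycleList_congr h).symm)
    fun _ _ => rfl

end Diagram

end Area

section RestArea

variable {S K D : Type*} [MulAction (FreeGroup S) K] {R : Set (FreeGroup S)} {Ψ : AreaForm R K}

namespace Diagram

lemma mem_relatorWords_of_sameCycle [DecidableEq S] [Finite D] {M : Diagram S K D} {d x : D}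
    (hR : FG.Symmetrized R) (hd : M.word d ∈ relatorWords R) (h : M.face.SameCycle d x) :
    M.word x ∈ relatorWords R := by
  obtain ⟨u, v, hu, hv, -⟩ := M.exists_word_eq_append_comm_of_sameCycle h
  exact hv ▸ append_comm_mem_relatorWords hR (hu ▸ hd)

section Splice

variable [Finite D] [DecidableEq D] {M : Diagram S K D} {d₁ d₂ x : D} {h : M.base d₁ = M.base d₂}

lemma word_splice_of_notMem (hx₁ : x ∉ cycleList M.face d₁) (hx₂ : x ∉ cycleList M.face d₂) :
    (M.splice d₁ d₂ h).word x = M.word x := by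
  rw [mem_cycleList] at hx₁ hx₂
  exact congrArg (List.map M.label) (cycleList_splice_of_notMem hx₁ hx₂)

end Splice

section Sum

variable {D₁ D₂ : Type*}

/-- The disjoint union of two diagrams. -/
def sum (M₁ : Diagram S K D₁) (M₂ : Diagram S K D₂) : Diagram S K (D₁ ⊕ D₂) where
  face := sumCongr M₁.face M₂.face
  edge := sumCongr M₁.edge M₂.edge
  label := Sum.elim M₁.label M₂.label
  base := Sum.elim M₁.base M₂.base
  edge_mul_edge := by
    rw [Perm.sumCongr_mul, M₁.edge_mul_edge, M₂.edge_mul_edge, Perm.sumCongr_one]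
  edge_ne := by
    rintro (d | d)
    exacts [fun h => M₁.edge_ne d (Sum.inl_injective h),
      fun h => M₂.edge_ne d (Sum.inr_injective h)]
  label_edge := by
    rintro (d | d)
    exacts [M₁.label_edge d, M₂.label_edge d]
  base_face := by
    rintro (d | d)
    exacts [M₁.base_face d, M₂.base_face d]
  base_edge := by
    rintro (d | d)
    exacts [M₁.base_edge d, M₂.base_edge d]

variable (M₁ : Diagram S K D₁) (M₂ : Diagram S K D₂)

lemma cycleList_sum_inl (d : D₁) :
    cycleList (M₁.sum M₂).face (Sum.inl d) = (cycleList M₁.face d).map Sum.inl :=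
  cycleList_of_semiconj Sum.inl_injective (fun _ => rfl) d

lemma cycleList_sum_inr (d : D₂) :
    cycleList (M₁.sum M₂).face (Sum.inr d) = (cycleList M₂.face d).map Sum.inr :=
  cycleList_of_semiconj Sum.inr_injective (fun _ => rfl) d

lemma word_sum_inl (d : D₁) : (M₁.sum M₂).word (Sum.inl d) = M₁.word d :=
  word_of_semiconj Sum.inl_injective (fun _ => rfl) (fun _ => rfl) d

lemma word_sum_inr (d : D₂) : (M₁.sum M₂).word (Sum.inr d) = M₂.word d :=
  word_of_semiconj Sum.inr_injective (fun _ => rfl) (fun _ => rfl) d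

variable [Finite D₁] [Finite D₂]

lemma doubleGenus_sum : (M₁.sum M₂).doubleGenus = M₁.doubleGenus + M₂.doubleGenus :=
  doubleGenus_of_sum (Equiv.refl _) (by rintro (d | d) <;> rfl) (by rintro (d | d) <;> rfl)

lemma not_sameCycle_sum (d₁ : D₁) (d₂ : D₂) :
    ¬ (M₁.sum M₂).face.SameCycle (Sum.inl d₁) (Sum.inr d₂) := by
  simp [← mem_cycleList, cycleList_sum_inl]

variable [DecidableEq D₁] [DecidableEq D₂]

/-- The disjoint union of two diagrams, with the polygons of `d₁` and `d₂` joined into one. -/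
def join (d₁ : D₁) (d₂ : D₂) (h : M₁.base d₁ = M₂.base d₂) : Diagram S K (D₁ ⊕ D₂) :=
  (M₁.sum M₂).splice (Sum.inl d₁) (Sum.inr d₂)
    (show (M₁.sum M₂).base (Sum.inl d₁) = (M₁.sum M₂).base (Sum.inr d₂) from h)

variable {M₁ M₂} {d₁ : D₁} {d₂ : D₂} (h : M₁.base d₁ = M₂.base d₂)

lemma doubleGenus_join_le : (M₁.join M₂ d₁ d₂ h).doubleGenus ≤ M₁.doubleGenus + M₂.doubleGenus := by
  have hside : ∀ a b, Step (M₁.sum M₂).face (M₁.sum M₂).edge a b → a.isLeft = b.isLeft := by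
    rintro (a | a) _ (rfl | rfl) <;> rfl
  exact (doubleGenus_swap_mul_le_of_mk_ne fun hmk =>
    Bool.noConfusion (congrArg (Quot.lift Sum.isLeft hside) hmk)).trans_eq (doubleGenus_sum M₁ M₂)

lemma cycleList_join : cycleList (M₁.join M₂ d₁ d₂ h).face (Sum.inl d₁) =
    (cycleList M₁.face d₁).map Sum.inl ++ (cycleList M₂.face d₂).map Sum.inr := by
  rw [join, cycleList_splice_of_not_sameCycle (not_sameCycle_sum M₁ M₂ d₁ d₂), cycleList_sum_inl,
    cycleList_sum_inr]

lemma word_join : (M₁.join M₂ d₁ d₂ h).word (Sum.inl d₁) = M₁.word d₁ ++ M₂.word d₂ := by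
  rw [join, word_splice_of_not_sameCycle (not_sameCycle_sum M₁ M₂ d₁ d₂), word_sum_inl,
    word_sum_inr]

lemma word_join_inl {x : D₁} (hx : x ∉ cycleList M₁.face d₁) :
    (M₁.join M₂ d₁ d₂ h).word (Sum.inl x) = M₁.word x := by
  rw [join, word_splice_of_notMem (by simpa [cycleList_sum_inl]) (by simp [cycleList_sum_inr]),
    word_sum_inl]

lemma word_join_inr {x : D₂} (hx : x ∉ cycleList M₂.face d₂) :
    (M₁.join M₂ d₁ d₂ h).word (Sum.inr x) = M₂.word x := by
  rw [join, word_splice_of_notMem (by simp [cycleList_sum_inl]) (by simpa [cycleList_sum_inr]),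
    word_sum_inr]

end Sum

variable {M : Diagram S K D} {d d₁ d₂ x : D} [Fintype D] [DecidableEq D]
  {h : M.base d₁ = M.base d₂}

lemma restArea_congr {M' : Diagram S K D} (hbase : M'.base = M.base)
    (hmem : ∀ z, z ∈ cycleList M'.face x ↔ z ∈ cycleList M.face d)
    (hword : ∀ z ∉ cycleList M.face d, M'.word z = M.word z) :
    M'.restArea Ψ x = M.restArea Ψ d := by
  simp only [restArea, hmem]
  refine Finset.sum_congr rfl fun z hz => ?_
  rw [area, area, hbase, hword z (Finset.mem_filter.1 hz).2]

lemma restArea_splice_cut (hd : M.face.SameCycle d₁ d₂)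
    (hcycle : cycleList M.face d₁ =
      cycleList (M.splice d₁ d₂ h).face d₁ ++ cycleList (M.splice d₁ d₂ h).face d₂)
    (hword : FreeGroup.mk ((M.splice d₁ d₂ h).word d₂) ∈ Subgroup.normalClosure R) :
    (M.splice d₁ d₂ h).restArea Ψ d₁ =
      M.restArea Ψ d₁ + Ψ.toFun (M.base d₂) (FreeGroup.mk ((M.splice d₁ d₂ h).word d₂)) := by
  have hdisj := (List.nodup_append'.1 (hcycle ▸ (isCycleList_cycleList M.face d₁).nodup)).2.2
  have hsplit : Finset.univ.filter (· ∉ cycleList (M.splice d₁ d₂ h).face d₁) =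
      Finset.univ.filter (· ∉ cycleList M.face d₁) ∪
        (cycleList (M.splice d₁ d₂ h).face d₂).toFinset := by
    ext x
    simp only [hcycle, Finset.mem_filter_univ, Finset.mem_union, List.mem_append,
      List.mem_toFinset]
    have := @hdisj x
    tauto
  rw [restArea, hsplit, Finset.sum_union, sum_area_cycleList _ _ hword, restArea]
  · refine congrArg₂ _ (Finset.sum_congr rfl fun x hx => ?_) rfl
    have hx₁ := (Finset.mem_filter.1 hx).2
    rw [area, area, word_splice_of_notMem hx₁ (mt (mem_cycleList_congr hd).2 hx₁), splice_base]
  · refine Finset.disjoint_left.2 fun x hx hx' => (Finset.mem_filter.1 hx).2 ?_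
    rw [hcycle]
    exact List.mem_append_right _ (List.mem_toFinset.1 hx')

lemma restArea_join {D₁ D₂ : Type*} [Fintype D₁] [Fintype D₂] [DecidableEq D₁] [DecidableEq D₂]
    {M₁ : Diagram S K D₁} {M₂ : Diagram S K D₂} {d₁ : D₁} {d₂ : D₂}
    (h : M₁.base d₁ = M₂.base d₂) :
    (M₁.join M₂ d₁ d₂ h).restArea Ψ (Sum.inl d₁) = M₁.restArea Ψ d₁ + M₂.restArea Ψ d₂ := by
  have hinl (x : D₁) : Sum.inl x ∈ cycleList (M₁.join M₂ d₁ d₂ h).face (Sum.inl d₁) ↔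
      x ∈ cycleList M₁.face d₁ := by simp [cycleList_join]
  have hinr (x : D₂) : Sum.inr x ∈ cycleList (M₁.join M₂ d₁ d₂ h).face (Sum.inl d₁) ↔
      x ∈ cycleList M₂.face d₂ := by simp [cycleList_join]
  simp only [restArea, Finset.sum_filter, Fintype.sum_sum_type, hinl, hinr]
  refine congrArg₂ (· + ·) (Finset.sum_congr rfl fun x _ => ?_)
    (Finset.sum_congr rfl fun x _ => ?_)
  · split_ifs with hx
    · rfl
    · rw [area, area, word_join_inl h hx]
      rfl
  · split_ifs with hx
    · rfl
    · rw [area, area, word_join_inr h hx]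
      rfl

end Diagram

end RestArea

/-! ### Fillings of loops -/

section Fillings

variable {S K : Type*} [MulAction (FreeGroup S) K] {R : Set (FreeGroup S)} {Ψ : AreaForm R K}
  {n n₁ n₂ : ℕ} {g g₁ g₂ : ℤ} {A A₁ A₂ : ℚ} {u v w r : List (S × Bool)} {k : K}

/-- The loop read from `k` along `w` bounds a surface tiled by relators of total area `A`: together
with one more polygon with boundary `w` it makes a diagram with at most `n` sides and twice the
genus at most `g`. -/
def Fills (Ψ : AreaForm R K) (n : ℕ) (g : ℤ) (A : ℚ) (w : List (S × Bool)) (k : K) : Prop :=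
  ∃ (D : Type) (_ : Fintype D) (_ : DecidableEq D) (M : Diagram S K D) (d : D),
    Fintype.card D ≤ n ∧ M.doubleGenus ≤ g ∧ M.word d = w ∧ M.base d = k ∧
      (∀ x ∉ cycleList M.face d, M.word x ∈ relatorWords R) ∧ M.restArea Ψ d = A

namespace Fills

open Diagram

lemma mk_smul_eq_self : Fills Ψ n g A w k → FreeGroup.mk w • k = k := by
  rintro ⟨D, _, _, M, d, -, -, rfl, rfl, -, -⟩
  exact M.mk_word_smul_base d

lemma ne_nil : Fills Ψ n g A w k → w ≠ [] := by
  rintro ⟨D, _, _, M, d, -, -, rfl, -, -, -⟩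
  exact M.word_ne_nil d

lemma mono (hn : n₁ ≤ n₂) : Fills Ψ n₁ g A w k → Fills Ψ n₂ g A w k := by
  rintro ⟨D, _, _, M, d, hD, h⟩
  exact ⟨D, inferInstance, inferInstance, M, d, hD.trans hn, h⟩

lemma append_comm (h : Fills Ψ n g A (u ++ v) k) :
    Fills Ψ n g A (v ++ u) ((FreeGroup.mk u)⁻¹ • k) := by
  rcases eq_or_ne v [] with rfl | hv
  · have hk := h.mk_smul_eq_self
    rw [List.append_nil] at h hk
    rwa [List.nil_append, inv_smul_eq_iff.2 hk.symm]
  obtain ⟨D, _, _, M, d, hn, hg, hw, rfl, hrel, rfl⟩ := h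
  obtain ⟨y, hdy, hy, hbase⟩ := M.exists_word_eq_append_comm hw hv
  refine ⟨D, inferInstance, inferInstance, M, y, hn, hg, hy, hbase, fun x hx => hrel x ?_,
    restArea_of_sameCycle hdy⟩
  rwa [mem_cycleList_congr hdy]

lemma append (h₁ : Fills Ψ n₁ g₁ A₁ u k) (h₂ : Fills Ψ n₂ g₂ A₂ v k) :
    Fills Ψ (n₁ + n₂) (g₁ + g₂) (A₁ + A₂) (u ++ v) k := by
  obtain ⟨D₁, _, _, M₁, d₁, hn₁, hg₁, rfl, rfl, hrel₁, rfl⟩ := h₁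
  obtain ⟨D₂, _, _, M₂, d₂, hn₂, hg₂, rfl, hbase, hrel₂, rfl⟩ := h₂
  refine ⟨D₁ ⊕ D₂, inferInstance, inferInstance, M₁.join M₂ d₁ d₂ hbase.symm, Sum.inl d₁,
    ?_, ?_, word_join _, rfl, ?_, restArea_join _⟩
  · rw [Fintype.card_sum]
    exact add_le_add hn₁ hn₂
  · exact (doubleGenus_join_le _).trans (add_le_add hg₁ hg₂)
  · rintro (x | x) hx
    · have hx : x ∉ cycleList M₁.face d₁ := by simpa [cycleList_join] using hx
      rw [word_join_inl _ hx]
      exact hrel₁ x hx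
    · have hx : x ∉ cycleList M₂.face d₂ := by simpa [cycleList_join] using hx
      rw [word_join_inr _ hx]
      exact hrel₂ x hx

lemma insert (h₁ : Fills Ψ n₁ g₁ A₁ (u ++ v) k)
    (h₂ : Fills Ψ n₂ g₂ A₂ w ((FreeGroup.mk u)⁻¹ • k)) :
    Fills Ψ (n₁ + n₂) (g₁ + g₂) (A₁ + A₂) (u ++ w ++ v) k := by
  have h := h₁.append_comm.append h₂
  rw [List.append_assoc] at h
  have hk := h₁.mk_smul_eq_self
  rw [← FreeGroup.mul_mk, mul_smul, ← eq_inv_smul_iff, ← eq_inv_smul_iff] at hk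
  exact hk ▸ h.append_comm

lemma cons_neg (s : S × Bool) (k : K) : Fills Ψ 2 0 0 [s, (s.1, !s.2)] k := by
  have hbase (b : Bool) : cond (!b) ((FreeGroup.mk [s])⁻¹ • k) k =
      (FreeGroup.mk [cond b (s.1, !s.2) s])⁻¹ • cond b ((FreeGroup.mk [s])⁻¹ • k) k := by
    cases b
    · rfl
    · exact (eq_inv_smul_iff.2 (by rw [FreeGroup.inv_mk]; rfl))
  let M : Diagram S K Bool :=
    { face := boolNot
      edge := boolNot
      label b := cond b (s.1, !s.2) s
      base b := cond b ((FreeGroup.mk [s])⁻¹ • k) k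
      edge_mul_edge := by decide
      edge_ne := by decide
      label_edge := by rintro (_ | _) <;> simp
      base_face := hbase
      base_edge := hbase }
  have hcycle : cycleList M.face false = [false, true] :=
    IsCycleList.cycleList_eq ⟨by simp, by simp, rfl⟩
  refine ⟨Bool, _, inferInstance, M, false, le_rfl,
    (doubleGenus_self_of_mul_self_eq_one M.edge_mul_edge).le, ?_, rfl, ?_, ?_⟩
  · rw [word, hcycle]
    rfl
  · simp [hcycle]
  · simp [restArea, hcycle]

lemma append_invRev (hu : u ≠ []) (k : K) :
    Fills Ψ (2 * u.length) 0 0 (u ++ FreeGroup.invRev u) k := by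
  induction u generalizing k with
  | nil => exact absurd rfl hu
  | cons s t ih =>
    rcases eq_or_ne t [] with rfl | ht
    · exact cons_neg s k
    have h := (cons_neg (Ψ := Ψ) s k).insert (u := [s]) (v := [(s.1, !s.2)]) (ih ht _)
    rw [add_comm, add_zero, add_zero] at h
    simpa [FreeGroup.invRev, mul_add] using h

lemma exchange (hu : u ≠ []) (hw : w ≠ []) (huk : FreeGroup.mk u • k = k)
    (hvk : FreeGroup.mk v • k = k) (h : Fills Ψ n g A (u ++ v ++ w) k) :
    Fills Ψ n (g + 2) A (u ++ w ++ v) k := by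
  obtain ⟨D, _, _, M, d, hn, hg, hd, rfl, hrel, rfl⟩ := h
  rw [List.append_assoc] at hd
  obtain ⟨y, hdy, hy, hcut⟩ := M.exists_splice_cut hd hu (by simp [hw])
  have hbase : M.base d = M.base y := (hy.trans (inv_smul_eq_iff.2 huk.symm)).symm
  obtain ⟨hwd, hwy, hcycle⟩ := hcut hbase
  obtain ⟨z, hyz, hwz, hz⟩ := (M.splice d y hbase).exists_word_eq_append_comm hwy hw
  have hbase' : (M.splice d y hbase).base d = (M.splice d y hbase).base z :=
    hbase.trans ((eq_inv_smul_iff.2 (hbase ▸ hvk)).trans hz.symm)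
  have hdz : ¬ (M.splice d y hbase).face.SameCycle d z := fun hdz =>
    (List.nodup_append'.1 (hcycle ▸ (isCycleList_cycleList M.face d).nodup)).2.2
      (mem_cycleList.2 hdz) (mem_cycleList.2 hyz)
  have hmem (x : D) : x ∈ cycleList ((M.splice d y hbase).splice d z hbase').face d ↔
      x ∈ cycleList M.face d := by
    rw [cycleList_splice_of_not_sameCycle hdz, hcycle, List.mem_append, List.mem_append,
      mem_cycleList_congr hyz]
  have hword (x : D) (hx : x ∉ cycleList M.face d) :
      ((M.splice d y hbase).splice d z hbase').word x = M.word x := by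
    have hx' := hx
    rw [hcycle, List.mem_append, not_or, mem_cycleList_congr hyz] at hx'
    rw [word_splice_of_notMem hx'.1 hx'.2,
      word_splice_of_notMem hx (mt (mem_cycleList_congr hdy).2 hx)]
  refine ⟨D, _, _, (M.splice d y hbase).splice d z hbase', d, hn, ?_, ?_, rfl, fun x hx => ?_,
    restArea_congr rfl hmem hword⟩
  · exact doubleGenus_splice_le_add_two.trans
      (by simpa using (doubleGenus_splice_le (.inl hdy)).trans hg)
  · rw [word_splice_of_not_sameCycle hdz, hwd, hwz, List.append_assoc]
  · rw [hmem] at hx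
    exact hword x hx ▸ hrel x hx

lemma commutator (hu : u ≠ []) (huk : FreeGroup.mk u • k = k) (hvk : FreeGroup.mk v • k = k) :
    Fills Ψ (2 * (u ++ v).length) 2 0
      (u ++ v ++ FreeGroup.invRev u ++ FreeGroup.invRev v) k := by
  have h := append_invRev (Ψ := Ψ) (u := u ++ v) (by simp [hu]) k
  rw [FreeGroup.invRev_append, ← List.append_assoc] at h
  refine h.exchange (by simp [hu]) (by simp [FreeGroup.invRev, hu]) ?_ ?_
  · rw [← FreeGroup.mul_mk, mul_smul, hvk, huk]
  · rw [← FreeGroup.inv_mk, inv_smul_eq_iff, hvk]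

variable [DecidableEq S]

lemma of_append_relator (hR : FG.Symmetrized R) (hr : r ∈ relatorWords R) (hu : u ≠ [])
    (h : Fills Ψ n g A (u ++ r) k) : Fills Ψ n g (A + Ψ.toFun k (FreeGroup.mk r)) u k := by
  have hk := h.mk_smul_eq_self
  rw [← FreeGroup.mul_mk, mul_smul, Ψ.smul_eq_self k _ (mk_mem_normalClosure hr)] at hk
  obtain ⟨D, _, _, M, d, hn, hg, hd, rfl, hrel, rfl⟩ := h
  obtain ⟨y, hdy, hy, hcut⟩ := M.exists_splice_cut hd hu (ne_nil_of_mem_relatorWords hR hr)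
  have hbase : M.base d = M.base y := hy.trans (inv_smul_eq_iff.2 hk.symm) |>.symm
  obtain ⟨hwd, hwy, hcycle⟩ := hcut hbase
  refine ⟨D, inferInstance, inferInstance, M.splice d y hbase, d, hn,
    (doubleGenus_splice_le (.inl hdy)).trans hg, hwd, rfl, fun x hx => ?_, ?_⟩
  · by_cases hxy : x ∈ cycleList (M.splice d y hbase).face y
    · exact mem_relatorWords_of_sameCycle hR (hwy ▸ hr) (mem_cycleList.1 hxy)
    · have hxd : x ∉ cycleList M.face d := by
        rw [hcycle, List.mem_append]
        exact not_or.2 ⟨hx, hxy⟩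
      rw [word_splice_of_notMem hxd (mt (mem_cycleList_congr hdy).2 hxd)]
      exact hrel x hxd
  · rw [restArea_splice_cut hdy hcycle (hwy ▸ mk_mem_normalClosure hr), hwy, hbase]

lemma erase_relator (hR : FG.Symmetrized R) (hr : r ∈ relatorWords R) (hv : v ≠ [])
    (h : Fills Ψ n g A (u ++ r ++ v) k) :
    Fills Ψ n g (A + Ψ.toFun ((FreeGroup.mk u)⁻¹ • k) (FreeGroup.mk r)) (u ++ v) k := by
  have hbase : (FreeGroup.mk (u ++ r))⁻¹ • k = (FreeGroup.mk u)⁻¹ • k := by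
    rw [← FreeGroup.mul_mk, mul_inv_rev, mul_smul,
      Ψ.smul_eq_self _ _ (inv_mem (mk_mem_normalClosure hr))]
  have hk := h.mk_smul_eq_self
  rw [← FreeGroup.mul_mk, mul_smul, ← eq_inv_smul_iff, ← eq_inv_smul_iff, hbase] at hk
  have h' := h.append_comm
  rw [← List.append_assoc, hbase] at h'
  have herase := (of_append_relator hR hr (by simp [hv]) h').append_comm
  rwa [← hk] at herase

lemma append_conj_inv (hR : FG.Symmetrized R) (hr : r ∈ relatorWords R) (h : Fills Ψ n g A w k) :
    Fills Ψ (n + 2 * (u ++ r).length) g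
      (A + Ψ.toFun k (FreeGroup.mk u * FreeGroup.mk r * (FreeGroup.mk u)⁻¹))
      (w ++ (u ++ FreeGroup.invRev r ++ FreeGroup.invRev u)) k := by
  have hr' := invRev_mem_relatorWords hR hr
  have hne : FreeGroup.invRev r ++ FreeGroup.invRev u ≠ [] := by
    simp [ne_nil_of_mem_relatorWords hR hr']
  have hinsert := h.append
    (append_invRev (Ψ := Ψ) (u := u ++ r) (by simp [ne_nil_of_mem_relatorWords hR hr]) k)
  rw [FreeGroup.invRev_append, add_zero, add_zero, ← List.append_assoc, ← List.append_assoc w]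
    at hinsert
  have herase := hinsert.erase_relator hR hr hne
  have harea := Ψ.map_conj ((FreeGroup.mk u)⁻¹ • k) (FreeGroup.mk u) _ (mk_mem_normalClosure hr)
  rw [smul_inv_smul] at harea
  rw [harea]
  rwa [← FreeGroup.mul_mk, mul_inv_rev, mul_smul, inv_smul_eq_iff.2 h.mk_smul_eq_self.symm,
    List.append_assoc w, ← List.append_assoc u] at herase

lemma exists_append_of_mem_conjugatesOfSet (hR : FG.Symmetrized R) {x : FreeGroup S}
    (hx : x ∈ Group.conjugatesOfSet R) (k : K) : ∃ v, FreeGroup.mk v = x⁻¹ ∧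
      ∀ n A w, Fills Ψ n g A w k → ∃ n', Fills Ψ n' g (A + Ψ.toFun k x) (w ++ v) k := by
  obtain ⟨r, hr, hrx⟩ := Group.mem_conjugatesOfSet_iff.1 hx
  obtain ⟨c, rfl⟩ := isConj_iff.1 hrx
  have hword : r.toWord ∈ relatorWords R :=
    ⟨FreeGroup.isReduced_toWord, by rwa [FreeGroup.mk_toWord]⟩
  refine ⟨c.toWord ++ FreeGroup.invRev r.toWord ++ FreeGroup.invRev c.toWord, ?_,
    fun n A w h => ?_⟩
  · rw [← FreeGroup.mul_mk, ← FreeGroup.mul_mk, ← FreeGroup.inv_mk, ← FreeGroup.inv_mk,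
      FreeGroup.mk_toWord, FreeGroup.mk_toWord]
    group
  · have happend := h.append_conj_inv hR hword (u := c.toWord)
    rw [FreeGroup.mk_toWord, FreeGroup.mk_toWord] at happend
    exact ⟨_, happend⟩

lemma exists_append_of_mem_normalClosure (hR : FG.Symmetrized R) {x : FreeGroup S}
    (hx : x ∈ Subgroup.normalClosure R) (k : K) : ∃ v, FreeGroup.mk v = x⁻¹ ∧
      ∀ n A w, Fills Ψ n g A w k → ∃ n', Fills Ψ n' g (A + Ψ.toFun k x) (w ++ v) k := by
  induction hx using Subgroup.closure_induction'' with
  | mem x hx => exact exists_append_of_mem_conjugatesOfSet hR hx k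
  | inv_mem x hx =>
    refine exists_append_of_mem_conjugatesOfSet hR ?_ k
    obtain ⟨r, hr, hrx⟩ := Group.mem_conjugatesOfSet_iff.1 hx
    obtain ⟨c, rfl⟩ := isConj_iff.1 hrx
    exact Group.mem_conjugatesOfSet_iff.2
      ⟨r⁻¹, hR.2.1 r hr, isConj_iff.2 ⟨c, (conj_inv ..).symm⟩⟩
  | one => exact ⟨[], inv_one.symm, fun n A w h => ⟨n, by simpa [Ψ.map_one] using h⟩⟩
  | mul x y hx hy ihx ihy =>
    obtain ⟨v, hv, hfillv⟩ := ihx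
    obtain ⟨u, hu, hfillu⟩ := ihy
    refine ⟨u ++ v, by rw [← FreeGroup.mul_mk, hu, hv, mul_inv_rev], fun n A w h => ?_⟩
    obtain ⟨m, hm⟩ := hfillu n A w h
    rw [Ψ.map_mul k x hx y hy, add_comm (Ψ.toFun k x), ← add_assoc, ← List.append_assoc]
    exact hfillv m _ _ hm

end Fills

end Fillings

/-! ### Collapsing bigons -/

section Collapse

variable {S K D : Type*} [MulAction (FreeGroup S) K] {R : Set (FreeGroup S)} {Ψ : AreaForm R K}

lemma mk_append_cancel (u v : List (S × Bool)) (s : S × Bool) :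
    FreeGroup.mk (u ++ s :: (s.1, !s.2) :: v) = FreeGroup.mk (u ++ v) :=
  Quot.sound FreeGroup.Red.Step.not

lemma exists_cancelling_pair {w : List (S × Bool)} (hw : FreeGroup.mk w = 1) (hne : w ≠ []) :
    ∃ u v s, w = u ++ s :: (s.1, !s.2) :: v := by
  by_contra! h
  refine mk_ne_one ?_ hne hw
  rw [FreeGroup.IsReduced, List.isChain_iff_forall_rel_of_append_cons_cons]
  rintro ⟨x, b⟩ ⟨-, c⟩ u v huv rfl
  by_contra hbc
  have hc : c = !b := Bool.eq_not_iff.2 (Ne.symm hbc)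
  exact h u v (x, b) (hc ▸ huv)

namespace Diagram

variable (M : Diagram S K D) {a x : D} {s t : S × Bool}

lemma base_edge_eq_base_face (d : D) : M.base (M.edge d) = M.base (M.face d) :=
  (M.base_edge d).trans (M.base_face d).symm

section Restrict

/-- The union of the components of the surface whose sides satisfy `p`. -/
def restrict (p : D → Prop) (hface : ∀ x, p (M.face x) ↔ p x) (hedge : ∀ x, p (M.edge x) ↔ p x) :
    Diagram S K {x // p x} where
  face := M.face.subtypePerm hface
  edge := M.edge.subtypePerm hedge
  label x := M.label x
  base x := M.base x
  edge_mul_edge := Equiv.ext fun x => Subtype.ext (M.edge_edge x)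
  edge_ne x h := M.edge_ne x (congrArg Subtype.val h)
  label_edge x := M.label_edge x
  base_face x := M.base_face x
  base_edge x := M.base_edge x

variable {p : D → Prop} {hface : ∀ x, p (M.face x) ↔ p x} {hedge : ∀ x, p (M.edge x) ↔ p x}

lemma cycleList_restrict (x : {x // p x}) : cycleList M.face x =
    (cycleList (M.restrict p hface hedge).face x).map Subtype.val :=
  cycleList_of_semiconj Subtype.val_injective (fun _ => rfl) x

lemma word_restrict (x : {x // p x}) : (M.restrict p hface hedge).word x = M.word x :=
  (word_of_semiconj Subtype.val_injective (fun _ => rfl) (fun _ => rfl) x).symm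

lemma doubleGenus_restrict_le [Finite D] :
    (M.restrict p hface hedge).doubleGenus ≤ M.doubleGenus := by
  classical
  have hsum : M.doubleGenus = (M.restrict p hface hedge).doubleGenus +
      (M.restrict (¬ p ·) (fun x => not_congr (hface x))
        fun x => not_congr (hedge x)).doubleGenus :=
    doubleGenus_of_sum (Equiv.sumCompl p) (by rintro (x | x) <;> rfl) (by rintro (x | x) <;> rfl)
  rw [hsum]
  exact le_add_of_nonneg_right (doubleGenus_nonneg ..)

end Restrict

section ExchangePartners

variable {M} {p q : D} [DecidableEq D]

/-- Exchange the partners of two sides that have the same image. -/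
def exchangePartners (M : Diagram S K D) (p q : D) (hlabel : M.label p = M.label q)
    (hbase : M.base p = M.base q) : Diagram S K D where
  face := M.face
  edge := swap p q * M.edge * swap p q
  label := M.label
  base := M.base
  edge_mul_edge := by simp [mul_assoc, ← mul_assoc M.edge, M.edge_mul_edge]
  edge_ne d h := M.edge_ne (swap p q d) (swap_apply_eq_iff.1 h)
  label_edge d := by
    simp only [Perm.mul_apply, apply_swap_eq_self hlabel, label_edge]
  base_face := M.base_face
  base_edge d := by
    simp only [Perm.mul_apply, apply_swap_eq_self hlabel, apply_swap_eq_self hbase, base_edge]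

lemma doubleGenus_exchangePartners_le [Finite D] {hlabel : M.label (M.edge a) = M.label (M.face a)}
    {hbase : M.base (M.edge a) = M.base (M.face a)} (ha : M.face a ≠ a)
    (ha' : M.face (M.face a) = a) :
    (M.exchangePartners (M.edge a) (M.face a) hlabel hbase).doubleGenus ≤ M.doubleGenus := by
  have hconj : Equiv.swap (M.edge a) (M.face a) * M.edge * Equiv.swap (M.edge a) (M.face a) =
      Equiv.swap (M.edge a) (M.face a) * (Equiv.swap a (M.edge (M.face a)) * M.edge) := by
    rw [mul_assoc, mul_swap_eq_swap_mul, edge_edge]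
  change SmallCancellation.doubleGenus M.face (_ * M.edge * _) ≤
    SmallCancellation.doubleGenus M.face M.edge
  rw [hconj, doubleGenus_comm, doubleGenus_comm M.face]
  refine (doubleGenus_swap_mul_le (.inr ⟨-1, ?_⟩)).trans (doubleGenus_swap_mul_le (.inr ⟨1, rfl⟩))
  rw [zpow_neg_one, Perm.inv_eq_iff_eq, Perm.mul_apply, ha', Perm.mul_apply,
    swap_apply_of_ne_of_ne (M.edge_ne a) (M.edge.injective.ne ha.symm)]

end ExchangePartners

variable {M}

lemma cycleList_of_word_eq_pair (h : M.word a = [s, t]) :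
    cycleList M.face a = [a, M.face a] := by
  have hlen : (cycleList M.face a).length = 2 := by simpa [word] using congrArg List.length h
  rw [cycleList, ← length_cycleList, hlen]
  rfl

lemma exists_restrict_of_word_eq_pair [Finite D] (h : M.word a = [s, (s.1, !s.2)]) :
    ∃ M' : Diagram S K {x // x ∉ cycleList M.face a}, M'.doubleGenus ≤ M.doubleGenus ∧
      ∀ x, cycleList M.face x.1 = (cycleList M'.face x).map Subtype.val ∧
        M'.word x = M.word x ∧ M'.base x = M.base x := by
  classical
  have hcycle := cycleList_of_word_eq_pair h
  have hlist := hcycle ▸ isCycleList_cycleList M.face a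
  have ha : M.face a ≠ a := by simpa [eq_comm] using hlist.nodup
  have ha' : M.face (M.face a) = a := by simpa using hlist.map_eq
  have hlabel : M.label (M.edge a) = M.label (M.face a) := by
    rw [word, hcycle] at h
    obtain ⟨rfl, h⟩ := List.cons.inj h
    rw [M.label_edge, (List.cons.inj h).1]
  let M₁ := M.exchangePartners (M.edge a) (M.face a) hlabel (M.base_edge_eq_base_face a)
  have hedge : M₁.edge a = M.face a := by
    change Equiv.swap _ _ (M.edge (Equiv.swap _ _ a)) = _
    rw [swap_apply_of_ne_of_ne (M.edge_ne a).symm ha.symm, swap_apply_left]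
  have hedge' : M₁.edge (M.face a) = a := hedge ▸ M₁.edge_edge a
  have hmem {σ : Perm D} (hσ : σ a = M.face a) (hσ' : σ (M.face a) = a) (x : D) :
      σ x ∉ cycleList M.face a ↔ x ∉ cycleList M.face a := by
    rw [hcycle, List.mem_pair, List.mem_pair, σ.injective.eq_iff' hσ', σ.injective.eq_iff' hσ,
      or_comm]
  exact ⟨M₁.restrict (· ∉ cycleList M.face a) (hmem rfl ha') (hmem hedge hedge'),
    M₁.doubleGenus_restrict_le.trans (doubleGenus_exchangePartners_le ha ha'),
    fun x => ⟨M₁.cycleList_restrict x, M₁.word_restrict x, rfl⟩⟩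

/-- `A` is the total area of a closed diagram of relators with at most `n` sides and twice the genus
at most `g`. -/
def IsClosedArea (Ψ : AreaForm R K) (n : ℕ) (g : ℤ) (A : ℚ) : Prop :=
  ∃ (D : Type) (_ : Fintype D) (_ : DecidableEq D) (M : Diagram S K D),
    Fintype.card D ≤ n ∧ M.doubleGenus ≤ g ∧ (∀ x, M.word x ∈ relatorWords R) ∧
      ∑ x, M.area Ψ x = A

end Diagram

namespace Fills

open Diagram

variable {n : ℕ} {g : ℤ} {A : ℚ} {u w : List (S × Bool)} {k : K} {s : S × Bool}

lemma isClosedArea_of_pair (h : Fills Ψ (n + 1) g A [s, (s.1, !s.2)] k) :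
    IsClosedArea Ψ n g A := by
  obtain ⟨D, _, _, M, a, hn, hg, hword, -, hrel, rfl⟩ := h
  obtain ⟨M', hM', h⟩ := M.exists_restrict_of_word_eq_pair hword
  have hcard : Fintype.card {x // x ∉ cycleList M.face a} < Fintype.card D :=
    Fintype.card_subtype_lt (x := a) (not_not.2 (mem_cycleList.2 (.refl _ _)))
  refine ⟨_, inferInstance, inferInstance, M', by omega, hM'.trans hg,
    fun x => (h x).2.1 ▸ hrel x x.2, ?_⟩
  rw [restArea, Finset.sum_subtype (p := (· ∉ cycleList M.face a)) _ (by simp)]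
  exact Finset.sum_congr rfl fun x _ => by rw [area, area, (h x).2.1, (h x).2.2]

lemma collapse (hw : w ≠ []) (h : Fills Ψ n g A (s :: (s.1, !s.2) :: w) k) : Fills Ψ n g A w k := by
  obtain ⟨D, _, _, M, a, hn, hg, hword, rfl, hrel, rfl⟩ := h
  obtain ⟨y, hay, hy, hcut⟩ := M.exists_splice_cut (u := [s, (s.1, !s.2)]) hword (by simp) hw
  have hbase : M.base a = M.base y := by
    have hpair : FreeGroup.mk [s, (s.1, !s.2)] = 1 := mk_append_cancel [] [] s
    rw [hy, hpair, inv_one, one_smul]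
  obtain ⟨hwa, hwy, hcycle⟩ := hcut hbase
  have hdisj := (List.nodup_append'.1 (hcycle ▸ (isCycleList_cycleList M.face a).nodup)).2.2
  have hya : y ∉ cycleList (M.splice a y hbase).face a := fun h =>
    hdisj h (mem_cycleList.2 (.refl _ _))
  obtain ⟨M', hM', h⟩ := exists_restrict_of_word_eq_pair hwa
  have hmem (x : {x // x ∉ cycleList (M.splice a y hbase).face a}) :
      x ∈ cycleList M'.face ⟨y, hya⟩ ↔ x.1 ∈ cycleList M.face a := by
    rw [hcycle, List.mem_append, or_iff_right x.2, (h ⟨y, hya⟩).1,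
      List.mem_map_of_injective Subtype.val_injective]
  have hwords (x : {x // x ∉ cycleList (M.splice a y hbase).face a})
      (hx : x ∉ cycleList M'.face ⟨y, hya⟩) : M'.word x = M.word x := by
    rw [hmem] at hx
    rw [(h x).2.1, word_splice_of_notMem hx (mt (mem_cycleList_congr hay).2 hx)]
  refine ⟨_, inferInstance, inferInstance, M', ⟨y, hya⟩, (Fintype.card_subtype_le _).trans hn,
    (hM'.trans (doubleGenus_splice_le (.inl hay))).trans hg, (h _).2.1.trans hwy,
    (h _).2.2.trans hbase.symm, fun x hx => hwords x hx ▸ hrel x (mt (hmem x).2 hx), ?_⟩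
  refine Finset.sum_nbij Subtype.val ?_ Subtype.val_injective.injOn ?_ ?_
  · simp only [Finset.mem_filter, Finset.mem_univ, true_and]
    exact fun x => mt (hmem x).2
  · intro x hx
    have hx : x ∉ cycleList M.face a := by simpa using hx
    have hx' : x ∉ cycleList (M.splice a y hbase).face a := fun h =>
      hx (hcycle ▸ List.mem_append_left _ h)
    exact ⟨⟨x, hx'⟩, by simpa [hmem] using hx, rfl⟩
  · intro x hx
    rw [area, area, hwords x (by simpa using hx), (h x).2.2]
    rfl

lemma isClosedArea (h : Fills Ψ (n + 1) g A w k) (hw : FreeGroup.mk w = 1) :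
    IsClosedArea Ψ n g A := by
  induction hlen : w.length using Nat.strong_induction_on generalizing w k with
  | _ m ih =>
  obtain ⟨u, v, s, rfl⟩ := exists_cancelling_pair hw h.ne_nil
  have h' := h.append_comm
  rw [List.cons_append, List.cons_append] at h'
  rcases eq_or_ne (v ++ u) [] with huv | huv
  · exact isClosedArea_of_pair (huv ▸ h')
  · refine ih _ ?_ (h'.collapse huv) ?_ rfl
    · simp only [← hlen, List.length_append, List.length_cons]
      omega
    · have hw' : FreeGroup.mk u * FreeGroup.mk v = 1 := by
        rw [← hw, FreeGroup.mul_mk, mk_append_cancel]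
      rw [← FreeGroup.mul_mk]
      exact mul_eq_one_comm.1 hw'

end Fills

end Collapse

/-! ### Curvature -/

section CycleSums

variable {D : Type*} (σ : Perm D)

lemma minimalPeriod_of_sameCycle [Finite D] {d x : D} (h : σ.SameCycle d x) :
    minimalPeriod σ x = minimalPeriod σ d := by
  obtain ⟨n, rfl⟩ := h.exists_nat_pow_eq
  rw [Perm.coe_pow]
  exact minimalPeriod_apply_iterate (σ.injective.mem_periodicPts d) n

variable [Fintype D]

lemma numCycles_eq_sum : (numCycles σ : ℚ) = ∑ d, (minimalPeriod σ d : ℚ)⁻¹ := by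
  classical
  have : Fintype (Quot (Step σ 1)) := Fintype.ofFinite _
  have hfiber (q : Quot (Step σ 1)) :
      ∑ d with Quot.mk (Step σ 1) d = q, (minimalPeriod σ d : ℚ)⁻¹ = 1 := by
    obtain ⟨x, rfl⟩ := q.exists_rep
    have hcycle : Finset.univ.filter (fun d => Quot.mk (Step σ 1) d = Quot.mk (Step σ 1) x) =
        (cycleList σ x).toFinset := by
      ext d
      simp only [Finset.mem_filter, Finset.mem_univ, true_and, List.mem_toFinset, mem_cycleList]
      rw [mk_step_one_eq_iff, Perm.sameCycle_comm]
    rw [hcycle, Finset.sum_congr rfl fun d hd => by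
      rw [minimalPeriod_of_sameCycle σ (mem_cycleList.1 (List.mem_toFinset.1 hd))],
      Finset.sum_const, List.toFinset_card_of_nodup (isCycleList_cycleList σ x).nodup,
      length_cycleList, nsmul_eq_mul,
      mul_inv_cancel₀ (Nat.cast_ne_zero.2 (minimalPeriod_pos σ x).ne')]
  rw [← Finset.sum_fiberwise (g := Quot.mk (Step σ 1)), Finset.sum_congr rfl fun q _ => hfiber q]
  simp [numCycles, numOrbits, numClasses]

lemma sum_sum_range_iterate {σ : Perm D} {t : D → ℕ} (ht : ∀ d, t (σ d) = t d) (f : D → ℚ) :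
    ∑ d, ∑ j ∈ Finset.range (t d), f (σ^[j + 1] d) = ∑ d, t d * f d := by
  have ht' (j : ℕ) (d : D) : t (σ^[j] d) = t d := by
    induction j with
    | zero => rfl
    | succ j ih => rw [iterate_succ_apply', ht, ih]
  have hright : ∑ d, t d * f d = ∑ d, ∑ _j ∈ Finset.range (t d), f d := by simp
  rw [hright, Finset.sum_sigma', Finset.sum_sigma']
  refine Finset.sum_nbij' (fun x => ⟨σ^[x.2 + 1] x.1, x.2⟩) (fun x => ⟨σ.symm^[x.2 + 1] x.1, x.2⟩)
    ?_ ?_ ?_ ?_ fun _ _ => rfl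
  · simp [ht, ht']
  · rintro ⟨d, j⟩ h
    have hd := ht' (j + 1) (σ.symm^[j + 1] d)
    rw [(LeftInverse.iterate σ.apply_symm_apply (j + 1)) d] at hd
    simp only [Finset.mem_sigma, Finset.mem_univ, true_and, Finset.mem_range] at h ⊢
    exact hd ▸ h
  · rintro ⟨d, j⟩ -
    exact Sigma.ext ((LeftInverse.iterate σ.symm_apply_apply (j + 1)) d) HEq.rfl
  · rintro ⟨d, j⟩ -
    exact Sigma.ext ((LeftInverse.iterate σ.apply_symm_apply (j + 1)) d) HEq.rfl

end CycleSums

section Curvature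

variable {S K D : Type*} [MulAction (FreeGroup S) K] {R : Set (FreeGroup S)}

lemma six_mul_lt_of_take_eq [DecidableEq S] (hC : FG.CPrimeSixth R) {k : ℕ}
    {u v : List (S × Bool)} (hu : u ∈ relatorWords R) (hv : v ∈ relatorWords R) (huv : u ≠ v)
    (hk : k ≠ 0) (hku : k ≤ u.length) (h : u.take k = v.take k) : 6 * k < u.length := by
  have hlen : (u.take k).length = k := List.length_take_of_le hku
  rw [← List.take_append_drop k u] at hu huv ⊢
  rw [← List.take_append_drop k v, ← h] at hv huv
  have hp : u.take k ≠ [] := List.ne_nil_of_length_pos (by omega)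
  have hlt := six_mul_length_lt hC hp hu hv (mt (congrArg _) huv)
  rwa [hlen] at hlt

namespace Diagram

variable (M : Diagram S K D) {d x : D} {t : ℕ}

/-- The number of sides that start at the initial vertex of the side `x`. -/
noncomputable def degree (x : D) : ℕ := minimalPeriod (M.face * M.edge) x

/-- The boundary word of the polygon across the side `d`, read backwards so that it starts with the
letter of `d`. -/
noncomputable def mirrorWord (d : D) : List (S × Bool) :=
  FreeGroup.invRev (M.word (M.face (M.edge d)))

variable {M}

lemma length_word : (M.word d).length = minimalPeriod M.face d := by
  rw [word, List.length_map, length_cycleList]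

lemma face_edge_face_of_degree_eq_two (h : M.degree (M.face x) = 2) :
    M.face (M.edge (M.face x)) = M.edge x := by
  have hfix := iterate_minimalPeriod (f := M.face * M.edge) (x := M.face x)
  rw [← degree, h] at hfix
  have hfix : M.edge (M.face (M.edge (M.face x))) = x := M.face.injective hfix
  rw [← M.edge_edge (M.face (M.edge _)), hfix]

lemma iterate_face_edge_iterate_face
    (h : ∀ j < t, M.degree (M.face^[j + 1] d) = 2) {j : ℕ} (hj : j ≤ t) :
    M.face^[j] (M.edge (M.face^[j] d)) = M.edge d := by
  induction j with
  | zero => rfl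
  | succ j ih =>
    have hdeg := h j hj
    rw [iterate_succ_apply'] at hdeg
    rw [iterate_succ_apply, iterate_succ_apply', face_edge_face_of_degree_eq_two hdeg,
      ih (Nat.le_of_succ_le hj)]

variable [Finite D]

lemma two_le_degree_face (hx : FreeGroup.IsReduced (M.word x)) : 2 ≤ M.degree (M.face x) := by
  have hpos : 0 < M.degree (M.face x) := minimalPeriod_pos (M.face * M.edge) (M.face x)
  by_contra hlt
  have hone : M.degree (M.face x) = 1 := by omega
  have hface : M.face x = M.edge x := by
    have h : M.face (M.edge (M.face x)) = M.face x := minimalPeriod_eq_one_iff_isFixedPt.1 hone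
    rw [← M.face.injective h, edge_edge, M.face.injective h]
  obtain ⟨m, hm⟩ : ∃ m, minimalPeriod M.face x = m + 2 := by
    refine Nat.exists_eq_add_of_le' ?_
    by_contra hlt
    have hpos := minimalPeriod_pos M.face x
    have hfix : M.face x = x := minimalPeriod_eq_one_iff_isFixedPt.1 (by omega)
    exact M.edge_ne x (hface ▸ hfix)
  rw [word, cycleList, hm, List.iterate, List.iterate, List.map_cons, List.map_cons,
    FreeGroup.isReduced_cons_cons, hface, label_edge] at hx
  simpa using hx.1 rfl

lemma length_mirrorWord : (M.mirrorWord d).length = minimalPeriod M.face (M.edge d) := by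
  rw [mirrorWord, FreeGroup.invRev_length, length_word,
    minimalPeriod_apply (M.face.injective.mem_periodicPts _)]

lemma getElem_mirrorWord {i : ℕ} (hi : i < (M.mirrorWord d).length)
    (hx : M.face^[i] x = M.edge d) : (M.mirrorWord d)[i] = M.label (M.edge x) := by
  have hi' := length_mirrorWord (M := M) ▸ hi
  have hiter : M.face^[minimalPeriod M.face (M.edge d) - 1 - i] (M.face (M.edge d)) = x := by
    apply M.face.injective.iterate i
    rw [hx, ← iterate_succ_apply, ← iterate_add_apply]
    have hsum : i + (minimalPeriod M.face (M.edge d) - 1 - i).succ =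
      minimalPeriod M.face (M.edge d) := by omega
    rw [hsum, iterate_minimalPeriod]
  simp only [mirrorWord, FreeGroup.invRev, word, List.getElem_reverse, List.getElem_map,
    List.length_map, getElem_cycleList, length_cycleList,
    minimalPeriod_apply (M.face.injective.mem_periodicPts _), hiter, label_edge]

lemma take_word_eq_take_mirrorWord (h : ∀ j < t, M.degree (M.face^[j + 1] d) = 2) {k : ℕ}
    (hk : k ≤ t + 1) (hkw : k ≤ (M.word d).length) (hkm : k ≤ (M.mirrorWord d).length) :
    (M.word d).take k = (M.mirrorWord d).take k := by
  refine List.ext_getElem (by simp [hkw, hkm]) fun i hi _ => ?_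
  have hik : i < k := (List.length_take_of_le hkw) ▸ hi
  rw [List.getElem_take, List.getElem_take, getElem_mirrorWord (hik.trans_le hkm)
    (iterate_face_edge_iterate_face h (Nat.lt_succ_iff.1 (hik.trans_le hk))), edge_edge]
  simp only [word, List.getElem_map, getElem_cycleList]

variable [DecidableEq S]

/- A maximal common boundary path of two polygons that are not mirror images reads a piece, so it is
shorter than a sixth of either boundary. -/
lemma exists_three_le_degree (hR : FG.Symmetrized R) (hC : FG.CPrimeSixth R)
    (hrel : ∀ x, M.word x ∈ relatorWords R) (hd : M.word d ≠ M.mirrorWord d) :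
    ∃ j < (minimalPeriod M.face d - 1) / 6, 3 ≤ M.degree (M.face^[j + 1] d) := by
  by_contra! hlow
  have hdeg (j : ℕ) (hj : j < (minimalPeriod M.face d - 1) / 6) :
      M.degree (M.face^[j + 1] d) = 2 := by
    refine le_antisymm (Nat.le_of_lt_succ (hlow j hj)) ?_
    rw [iterate_succ_apply']
    exact two_le_degree_face (hrel _).1
  have hmirror : M.mirrorWord d ∈ relatorWords R := invRev_mem_relatorWords hR (hrel _)
  have hw : (M.word d).length = minimalPeriod M.face d := length_word
  have hwpos : 0 < (M.word d).length := List.length_pos_iff.2 (M.word_ne_nil d)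
  have hmpos := List.length_pos_iff.2 (ne_nil_of_mem_relatorWords hR hmirror)
  obtain ⟨k, hk⟩ : ∃ k, k = min ((minimalPeriod M.face d - 1) / 6 + 1) (M.mirrorWord d).length :=
    ⟨_, rfl⟩
  have hkw : k ≤ (M.word d).length := by omega
  have hkm : k ≤ (M.mirrorWord d).length := by omega
  have htake := take_word_eq_take_mirrorWord hdeg (by omega) hkw hkm
  have hlt := six_mul_lt_of_take_eq hC (hrel d) hmirror hd (by omega) hkw htake
  have hlt' := six_mul_lt_of_take_eq hC hmirror (hrel d) hd.symm (by omega) hkm htake.symm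
  omega

end Diagram

end Curvature

section Charge

variable {S K D : Type*} [MulAction (FreeGroup S) K] {R : Set (FreeGroup S)}

namespace Diagram

/-- The charge paid at the corner `x`: each side of an `n`-gon asks each of the next `(n - 1) / 6`
vertices on its boundary for `1 / n`, which those of degree at least three pay. -/
noncomputable def charge (M : Diagram S K D) (x : D) : ℚ :=
  ((minimalPeriod M.face x - 1) / 6 : ℕ) *
    if 3 ≤ M.degree x then (minimalPeriod M.face x : ℚ)⁻¹ else 0

variable {M : Diagram S K D} {x : D}

lemma inv_degree_add_charge_lt [Finite D] (hx : 3 ≤ M.degree x) :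
    (M.degree x : ℚ)⁻¹ + M.charge x < 1 / 2 := by
  have hpos := minimalPeriod_pos M.face x
  have hsix : 6 * (((minimalPeriod M.face x - 1) / 6 : ℕ) : ℚ) < minimalPeriod M.face x := by
    exact_mod_cast (by omega : 6 * ((minimalPeriod M.face x - 1) / 6) < minimalPeriod M.face x)
  have hcharge : M.charge x < 1 / 6 := by
    rw [charge, if_pos hx, ← div_eq_mul_inv, div_lt_div_iff₀ (by exact_mod_cast hpos) (by norm_num)]
    linarith
  have hdegree : (M.degree x : ℚ)⁻¹ ≤ 3⁻¹ := inv_anti₀ (by norm_num) (by exact_mod_cast hx)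
  linarith

lemma inv_degree_add_charge_le [Finite D] (hx : 2 ≤ M.degree x) :
    (M.degree x : ℚ)⁻¹ + M.charge x ≤ 1 / 2 := by
  by_cases h : 3 ≤ M.degree x
  · exact (inv_degree_add_charge_lt h).le
  · rw [charge, if_neg h, mul_zero, add_zero, one_div]
    exact inv_anti₀ (by norm_num) (by exact_mod_cast hx)

lemma numCycles_face_le_sum_charge [Fintype D]
    (h : ∀ d, ∃ j < (minimalPeriod M.face d - 1) / 6, 3 ≤ M.degree (M.face^[j + 1] d)) :
    (numCycles M.face : ℚ) ≤ ∑ d, M.charge d := by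
  have hface (d : D) (j : ℕ) : minimalPeriod M.face (M.face^[j] d) = minimalPeriod M.face d :=
    minimalPeriod_apply_iterate (M.face.injective.mem_periodicPts d) j
  simp only [charge]
  rw [numCycles_eq_sum, ← sum_sum_range_iterate (fun d => by rw [← hface d 1, iterate_one])]
  refine Finset.sum_le_sum fun d _ => ?_
  obtain ⟨j, hj, hdeg⟩ := h d
  have hle := Finset.single_le_sum (f := fun j => if 3 ≤ M.degree (M.face^[j + 1] d) then
    (minimalPeriod M.face (M.face^[j + 1] d) : ℚ)⁻¹ else 0)
    (fun i _ => by split_ifs <;> positivity) (Finset.mem_range.2 hj)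
  rwa [if_pos hdeg, hface] at hle

lemma numCycles_edge [Fintype D] : (numCycles M.edge : ℚ) = Fintype.card D / 2 := by
  have hperiod (d : D) : minimalPeriod M.edge d = 2 :=
    minimalPeriod_eq_prime (M.edge_edge d) (M.edge_ne d)
  simp [numCycles_eq_sum, hperiod, div_eq_mul_inv]

theorem two_lt_doubleGenus [DecidableEq S] [Finite D] [Nonempty D] (hR : FG.Symmetrized R)
    (hC : FG.CPrimeSixth R) (hrel : ∀ x, M.word x ∈ relatorWords R)
    (hmirror : ∀ d, M.word d ≠ M.mirrorWord d) : 2 < M.doubleGenus := by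
  cases nonempty_fintype D
  have hbig (d : D) := exists_three_le_degree hR hC hrel (hmirror d)
  have hdeg (d : D) : 2 ≤ M.degree d := by
    rw [← M.face.apply_symm_apply d]
    exact two_le_degree_face (hrel _).1
  obtain ⟨j, -, hj⟩ := hbig (Classical.arbitrary D)
  have hsum : ∑ d, ((M.degree d : ℚ)⁻¹ + M.charge d) < ∑ _d : D, 1 / 2 :=
    Finset.sum_lt_sum (fun d _ => inv_degree_add_charge_le (hdeg d))
      ⟨_, Finset.mem_univ _, inv_degree_add_charge_lt hj⟩
  have hvertices : (numCycles (M.face * M.edge) : ℚ) = ∑ d, (M.degree d : ℚ)⁻¹ :=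
    numCycles_eq_sum _
  have hfaces := numCycles_face_le_sum_charge hbig
  have hedges := numCycles_edge (M := M)
  have horbits : (1 : ℚ) ≤ numOrbits M.face M.edge := by
    have : Nonempty (Quot (Step M.face M.edge)) := ⟨Quot.mk _ (Classical.arbitrary D)⟩
    rw [numOrbits, numClasses]
    exact_mod_cast Nat.succ_le_of_lt (Nat.card_pos (α := Quot (Step M.face M.edge)))
  rw [Finset.sum_add_distrib, ← hvertices, Finset.sum_const, Finset.card_univ, nsmul_eq_mul] at hsum
  have hgenus : (M.doubleGenus : ℚ) = 2 * numOrbits M.face M.edge + Fintype.card D -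
      numCycles M.face - numCycles M.edge - numCycles (M.face * M.edge) := by
    rw [doubleGenus, SmallCancellation.doubleGenus, Nat.card_eq_fintype_card]
    push_cast
    rfl
  have hlt : (2 : ℚ) < M.doubleGenus := by linarith
  exact_mod_cast hlt

end Diagram

end Charge

/-! ### Areas of closed surfaces -/

section ClosedArea

variable {S K D : Type*} [MulAction (FreeGroup S) K] {R : Set (FreeGroup S)} {Ψ : AreaForm R K}
  {n : ℕ} {A : ℚ} {u v : List (S × Bool)} {k : K}

lemma mk_append_eq_one_of_eq_invRev (h : u ++ v = FreeGroup.invRev (v ++ u)) :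
    FreeGroup.mk (u ++ v) = 1 := by
  rw [FreeGroup.invRev_append] at h
  obtain ⟨hu, hv⟩ := List.append_inj h (by simp)
  -- Free groups are torsion-free, so an element equal to its inverse is trivial.
  have hone {w : List (S × Bool)} (hw : w = FreeGroup.invRev w) : FreeGroup.mk w = 1 := by
    rw [← self_eq_inv, FreeGroup.inv_mk, ← hw]
  rw [← FreeGroup.mul_mk, hone hu, hone hv, one_mul]

namespace Diagram

lemma not_sameCycle_of_word_eq_mirrorWord [Finite D] {M : Diagram S K D} {d : D}
    (hd : FreeGroup.IsReduced (M.word d)) (hmirror : M.word d = M.mirrorWord d) :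
    ¬ M.face.SameCycle d (M.face (M.edge d)) := by
  intro h
  obtain ⟨u, v, hu, hv, -⟩ := M.exists_word_eq_append_comm_of_sameCycle h
  refine mk_ne_one hd (M.word_ne_nil d) ?_
  rw [mirrorWord, hu, hv] at hmirror
  rw [hu, mk_append_eq_one_of_eq_invRev hmirror]

lemma sum_area_eq_restArea_splice [Fintype D] [DecidableEq D] {M : Diagram S K D} {d₁ d₂ : D}
    {h : M.base d₁ = M.base d₂} (hd : ¬ M.face.SameCycle d₁ d₂)
    (hd₁ : FreeGroup.mk (M.word d₁) ∈ Subgroup.normalClosure R)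
    (hd₂ : FreeGroup.mk (M.word d₂) = (FreeGroup.mk (M.word d₁))⁻¹) :
    ∑ x, M.area Ψ x = (M.splice d₁ d₂ h).restArea Ψ d₁ := by
  have hdisj : Disjoint (cycleList M.face d₁).toFinset (cycleList M.face d₂).toFinset :=
    List.disjoint_toFinset_iff_disjoint.2 (disjoint_cycleList hd)
  have hcancel : ∑ x ∈ (cycleList (M.splice d₁ d₂ h).face d₁).toFinset, M.area Ψ x = 0 := by
    rw [cycleList_splice_of_not_sameCycle hd, List.toFinset_append, Finset.sum_union hdisj,
      sum_area_cycleList _ _ hd₁, sum_area_cycleList _ _ (hd₂ ▸ inv_mem hd₁), hd₂, ← h,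
      Ψ.map_inv _ hd₁, add_neg_cancel]
  rw [← Finset.sum_add_sum_compl (cycleList (M.splice d₁ d₂ h).face d₁).toFinset, hcancel,
    zero_add, restArea]
  refine Finset.sum_congr (by ext; simp) fun x hx => ?_
  rw [Finset.mem_filter_univ, cycleList_splice_of_not_sameCycle hd, List.mem_append,
    not_or] at hx
  rw [area, area, word_splice_of_notMem hx.1 hx.2, splice_base]

lemma IsClosedArea.eq_zero [DecidableEq S] (hR : FG.Symmetrized R) (hC : FG.CPrimeSixth R)
    (h : IsClosedArea Ψ n 2 A) : A = 0 := by
  induction n with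
  | zero =>
    obtain ⟨D, _, _, M, hn, -, -, rfl⟩ := h
    have := Fintype.card_eq_zero_iff.1 (Nat.le_zero.1 hn)
    exact Fintype.sum_empty _
  | succ n ih =>
    obtain ⟨D, _, _, M, hn, hg, hrel, rfl⟩ := h
    cases isEmpty_or_nonempty D
    · exact Fintype.sum_empty _
    obtain ⟨d, hmirror⟩ : ∃ d, M.word d = M.mirrorWord d := by
      by_contra! hne
      exact hg.not_gt (two_lt_doubleGenus hR hC hrel hne)
    have hbase : M.base d = M.base (M.face (M.edge d)) := by
      rw [← M.base_edge_eq_base_face, M.edge_edge]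
    have hd := not_sameCycle_of_word_eq_mirrorWord (hrel d).1 hmirror
    have hinv : FreeGroup.mk (M.word (M.face (M.edge d))) = (FreeGroup.mk (M.word d))⁻¹ := by
      rw [hmirror, mirrorWord, ← FreeGroup.inv_mk, inv_inv]
    have hfills : Fills Ψ (n + 1) 2 (∑ x, M.area Ψ x)
        (M.word d ++ M.word (M.face (M.edge d))) (M.base d) := by
      refine ⟨D, inferInstance, inferInstance, M.splice d _ hbase, d, hn,
        (doubleGenus_splice_le (.inr ⟨1, rfl⟩)).trans hg, word_splice_of_not_sameCycle hd, rfl, ?_,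
        (sum_area_eq_restArea_splice hd (mk_mem_normalClosure (hrel d)) hinv).symm⟩
      intro x hx
      rw [cycleList_splice_of_not_sameCycle hd, List.mem_append, not_or] at hx
      exact word_splice_of_notMem hx.1 hx.2 ▸ hrel x
    refine ih (hfills.isClosedArea ?_)
    rw [← FreeGroup.mul_mk, hinv, mul_inv_cancel]

end Diagram

lemma AreaForm.map_commutator_eq_zero [DecidableEq S] (hR : FG.Symmetrized R)
    (hC : FG.CPrimeSixth R) (Ψ : AreaForm R K) {a b : FreeGroup S} (ha : a • k = k)
    (hb : b • k = k) (hab : ⁅a, b⁆ ∈ Subgroup.normalClosure R) : Ψ.toFun k ⁅a, b⁆ = 0 := by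
  rcases eq_or_ne a 1 with rfl | hne
  · rw [commutatorElement_one_left, Ψ.map_one]
  obtain ⟨v, hv, hfill⟩ := Fills.exists_append_of_mem_normalClosure (Ψ := Ψ) (g := 2) hR hab k
  obtain ⟨n, hn⟩ := hfill _ _ _ (Fills.commutator (u := a.toWord) (v := b.toWord)
    (by simpa using hne) (by rwa [FreeGroup.mk_toWord]) (by rwa [FreeGroup.mk_toWord]))
  rw [zero_add] at hn
  refine (Fills.isClosedArea (hn.mono n.le_succ) ?_).eq_zero hR hC
  simp only [← FreeGroup.mul_mk, ← FreeGroup.inv_mk, FreeGroup.mk_toWord, hv, commutatorElement_def,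
    mul_inv_cancel]

end ClosedArea

/-- The rational Heisenberg group: the upper unitriangular matrices with entries `x`, `y` above the
diagonal and `z` in the corner. -/
@[ext]
structure Heisenberg where
  x : ℚ
  y : ℚ
  z : ℚ

namespace Heisenberg

instance : Mul Heisenberg := ⟨fun a b => ⟨a.x + b.x, a.y + b.y, a.z + b.z + a.x * b.y⟩⟩

instance : One Heisenberg := ⟨⟨0, 0, 0⟩⟩

instance : Inv Heisenberg := ⟨fun a => ⟨-a.x, -a.y, -a.z + a.x * a.y⟩⟩

variable (a b : Heisenberg)

lemma mul_def : a * b = ⟨a.x + b.x, a.y + b.y, a.z + b.z + a.x * b.y⟩ := rfl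

lemma one_def : (1 : Heisenberg) = ⟨0, 0, 0⟩ := rfl

lemma inv_def : a⁻¹ = ⟨-a.x, -a.y, -a.z + a.x * a.y⟩ := rfl

instance : Group Heisenberg :=
  Group.ofLeftAxioms
    (fun _ _ _ => by ext <;> simp only [mul_def] <;> ring)
    (fun _ => by ext <;> simp only [mul_def, one_def] <;> ring)
    (fun _ => by ext <;> simp only [mul_def, one_def, inv_def] <;> ring)

lemma z_commutatorElement : ⁅a, b⁆.z = a.x * b.y - b.x * a.y := by
  simp only [commutatorElement_def, mul_def, inv_def]
  ring

variable {a}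

lemma z_mul_of_x_eq_zero (hx : a.x = 0) : (a * b).z = a.z + b.z := by
  rw [mul_def, hx, zero_mul, add_zero]

lemma z_conj_of_eq_zero (hx : a.x = 0) (hy : a.y = 0) : (b * a * b⁻¹).z = a.z := by
  simp only [mul_def, inv_def, hx, hy]
  ring

lemma exists_lift {A : Type*} [Group A] [IsFreeGroup A] (ξ η : A →* Multiplicative ℚ) :
    ∃ θ : A →* Heisenberg, ∀ a, (θ a).x = (ξ a).toAdd ∧ (θ a).y = (η a).toAdd := by
  let θ : A →* Heisenberg := IsFreeGroup.lift fun s =>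
    ⟨(ξ (IsFreeGroup.of s)).toAdd, (η (IsFreeGroup.of s)).toAdd, 0⟩
  let X : Heisenberg →* Multiplicative ℚ := ⟨⟨fun a => .ofAdd a.x, rfl⟩, fun _ _ => rfl⟩
  let Y : Heisenberg →* Multiplicative ℚ := ⟨⟨fun a => .ofAdd a.y, rfl⟩, fun _ _ => rfl⟩
  have hX : X.comp θ = ξ := IsFreeGroup.ext_hom fun s => by
    rw [MonoidHom.comp_apply, IsFreeGroup.lift_of]
    rfl
  have hY : Y.comp θ = η := IsFreeGroup.ext_hom fun s => by
    rw [MonoidHom.comp_apply, IsFreeGroup.lift_of]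
    rfl
  exact ⟨θ, fun a => ⟨congrArg Multiplicative.toAdd (DFunLike.congr_fun hX a),
    congrArg Multiplicative.toAdd (DFunLike.congr_fun hY a)⟩⟩

end Heisenberg

section Torus

variable {S : Type*} {R : Set (FreeGroup S)} {A : Subgroup (FreeGroup S)}

/-- The area form on the covering complex with fundamental group `A` given by a function `z` that is
additive on the normal closure of `R` and invariant under conjugation by `A`; loops are carried to
the base coset along a transversal. -/
noncomputable def AreaForm.ofSubgroup (hA : Subgroup.normalClosure R ≤ A) (z : FreeGroup S → ℚ)
    (hmul : ∀ m ∈ Subgroup.normalClosure R, ∀ n ∈ Subgroup.normalClosure R, z (m * n) = z m + z n)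
    (hconj : ∀ a ∈ A, ∀ n ∈ Subgroup.normalClosure R, z (a * n * a⁻¹) = z n) :
    AreaForm R (FreeGroup S ⧸ A) where
  toFun k n := z (k.out⁻¹ * n * k.out)
  smul_eq_self k n hn := by
    induction k using QuotientGroup.induction_on with | H g
    refine (QuotientGroup.eq.2 (hA ?_)).symm
    simpa only [mul_assoc, smul_eq_mul, inv_inv] using
      Subgroup.normalClosure_normal.conj_mem n hn g⁻¹
  map_mul k m hm n hn := by
    have hconj_mem {n} (hn : n ∈ Subgroup.normalClosure R) :=
      Subgroup.normalClosure_normal.conj_mem' n hn k.out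
    rw [← hmul _ (hconj_mem hm) _ (hconj_mem hn)]
    group
  map_conj k g n hn := by
    have hmem : (g • k).out⁻¹ * (g * k.out) ∈ A := by
      rw [← QuotientGroup.eq, QuotientGroup.out_eq', ← smul_eq_mul,
        MulAction.Quotient.mk_smul_out]
    rw [← hconj _ hmem _ (Subgroup.normalClosure_normal.conj_mem' n hn k.out)]
    group

variable [DecidableEq S]

lemma map_commutator_eq_zero_of_conj_invariant (hR : FG.Symmetrized R) (hC : FG.CPrimeSixth R)
    (hA : Subgroup.normalClosure R ≤ A) {z : FreeGroup S → ℚ}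
    (hmul : ∀ m ∈ Subgroup.normalClosure R, ∀ n ∈ Subgroup.normalClosure R, z (m * n) = z m + z n)
    (hconj : ∀ a ∈ A, ∀ n ∈ Subgroup.normalClosure R, z (a * n * a⁻¹) = z n) {a b : FreeGroup S}
    (ha : a ∈ A) (hb : b ∈ A) (hab : ⁅a, b⁆ ∈ Subgroup.normalClosure R) : z ⁅a, b⁆ = 0 := by
  let k : FreeGroup S ⧸ A := (1 : FreeGroup S)
  have hfix {g : FreeGroup S} (hg : g ∈ A) : g • k = k := by
    rwa [← MulAction.mem_stabilizer_iff, MulAction.stabilizer_quotient]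
  have hout : k.out⁻¹ ∈ A := by
    rw [← mul_one k.out⁻¹, ← QuotientGroup.eq, QuotientGroup.out_eq']
  have hzero := (AreaForm.ofSubgroup hA z hmul hconj).map_commutator_eq_zero hR hC (hfix ha)
    (hfix hb) hab
  rw [← hconj _ hout _ hab, inv_inv]
  exact hzero

/-- Cup products of rational classes of degree one vanish on every torus. -/
lemma mul_eq_mul_of_commutator_mem (hR : FG.Symmetrized R) (hC : FG.CPrimeSixth R)
    (hA : Subgroup.normalClosure R ≤ A) {ξ η : A →* Multiplicative ℚ}
    (hξ : (Subgroup.normalClosure R).subgroupOf A ≤ ξ.ker)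
    (hη : (Subgroup.normalClosure R).subgroupOf A ≤ η.ker) {a b : A}
    (hab : ⁅(a : FreeGroup S), (b : FreeGroup S)⁆ ∈ Subgroup.normalClosure R) :
    (ξ a).toAdd * (η b).toAdd = (ξ b).toAdd * (η a).toAdd := by
  obtain ⟨θ, hθ⟩ := Heisenberg.exists_lift ξ η
  let z : FreeGroup S → ℚ := extend (↑) (fun a : A => (θ a).z) 0
  have hz (a : A) : z a = (θ a).z := Subtype.val_injective.extend_apply _ _ a
  have hx {n : A} (hn : (n : FreeGroup S) ∈ Subgroup.normalClosure R) : (θ n).x = 0 :=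
    (hθ n).1.trans (congrArg Multiplicative.toAdd (hξ hn))
  have hy {n : A} (hn : (n : FreeGroup S) ∈ Subgroup.normalClosure R) : (θ n).y = 0 :=
    (hθ n).2.trans (congrArg Multiplicative.toAdd (hη hn))
  have hzero := map_commutator_eq_zero_of_conj_invariant (z := z) hR hC hA
    (fun m hm n hn => by
      lift m to A using hA hm
      lift n to A using hA hn
      rw [← Subgroup.coe_mul, hz, hz, hz, map_mul, Heisenberg.z_mul_of_x_eq_zero _ (hx hm)])
    (fun a ha n hn => by
      lift a to A using ha
      lift n to A using hA hn
      rw [← Subgroup.coe_inv, ← Subgroup.coe_mul, ← Subgroup.coe_mul, hz, hz, map_mul, map_mul,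
        map_inv, Heisenberg.z_conj_of_eq_zero _ (hx hn) (hy hn)])
    a.2 b.2 hab
  have hcomm : (⁅a, b⁆ : A) = ⁅(a : FreeGroup S), (b : FreeGroup S)⁆ := rfl
  rw [← hcomm, hz, map_commutatorElement, Heisenberg.z_commutatorElement, sub_eq_zero] at hzero
  simpa only [hθ] using hzero

theorem mul_eq_mul_of_commute (hR : FG.Symmetrized R) (hC : FG.CPrimeSixth R)
    {H : Subgroup (PresentedGroup R)} (ξ η : H →* Multiplicative ℚ) {a b : H} (hab : Commute a b) :
    (ξ a).toAdd * (η b).toAdd = (ξ b).toAdd * (η a).toAdd := by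
  let π : H.comap (PresentedGroup.mk R) →* H := (PresentedGroup.mk R).subgroupComap H
  have hH : Subgroup.normalClosure R ≤ H.comap (PresentedGroup.mk R) := fun n hn => by
    rw [Subgroup.mem_comap, PresentedGroup.mk_eq_one_iff.2 hn]
    exact one_mem H
  have hker (ζ : H →* Multiplicative ℚ) :
      (Subgroup.normalClosure R).subgroupOf _ ≤ (ζ.comp π).ker := fun n hn => by
    have hn : π n = 1 := Subtype.ext (PresentedGroup.mk_eq_one_iff.2 hn)
    rw [MonoidHom.mem_ker, MonoidHom.comp_apply, hn, map_one]
  have hsurj : Surjective π :=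
    MonoidHom.subgroupComap_surjective_of_surjective _ _ (PresentedGroup.mk_surjective R)
  obtain ⟨a, rfl⟩ := hsurj a
  obtain ⟨b, rfl⟩ := hsurj b
  refine mul_eq_mul_of_commutator_mem hR hC hH (hker ξ) (hker η) ?_
  rw [← PresentedGroup.mk_eq_one_iff, map_commutatorElement]
  exact congrArg Subtype.val (commutatorElement_eq_one_iff_commute.2 hab)

theorem not_injective_of_int_prod_int (hR : FG.Symmetrized R) (hC : FG.CPrimeSixth R)
    (ρ : Multiplicative ℤ × Multiplicative ℤ →* PresentedGroup R) : ¬ Injective ρ := by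
  intro hρ
  let e := MonoidHom.ofInjective hρ
  let toRat : Multiplicative ℤ →* Multiplicative ℚ := (Int.castAddHom ℚ).toMultiplicative
  have h := mul_eq_mul_of_commute hR hC
    (toRat.comp ((MonoidHom.fst _ _).comp e.symm.toMonoidHom))
    (toRat.comp ((MonoidHom.snd _ _).comp e.symm.toMonoidHom))
    ((Commute.all (Multiplicative.ofAdd 1, 1) (1, Multiplicative.ofAdd 1)).map e)
  simp [toRat] at h

end Torus

end SmallCancellation

theorem cPrimeSixth_no_subgroup_F2_prod_F2_general {S : Type*} [DecidableEq S]
    (R : Set (FreeGroup S)) (hSym : FG.Symmetrized R) (hC' : FG.CPrimeSixth R)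
    {A B : Type*} [Group A] [Group B] {a : A} {b : B} (ha : ¬ IsOfFinOrder a)
    (hb : ¬ IsOfFinOrder b) : ¬ ∃ H : Subgroup (PresentedGroup R), Nonempty (H ≃* A × B) := by
  rintro ⟨H, ⟨e⟩⟩
  let ρ : Multiplicative ℤ × Multiplicative ℤ →* PresentedGroup R :=
    H.subtype.comp (e.symm.toMonoidHom.comp ((zpowersHom A a).prodMap (zpowersHom B b)))
  refine SmallCancellation.not_injective_of_int_prod_int hSym hC' ρ ?_
  exact H.subtype_injective.comp (e.symm.injective.comp
    ((injective_zpow_iff_not_isOfFinOrder.2 ha).prodMap (injective_zpow_iff_not_isOfFinOrder.2 hb)))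

/-- A C′(1/6) small-cancellation group contains no subgroup isomorphic to
`F₂ × F₂`. -/
theorem cPrimeSixth_no_subgroup_F2_prod_F2 {S : Type*} [DecidableEq S]
    (R : Set (FreeGroup S)) (hSym : FG.Symmetrized R)
    (hC' : FG.CPrimeSixth R) :
    ¬ ∃ H : Subgroup (PresentedGroup R),
        Nonempty (H ≃* (FreeGroup (Fin 2) × FreeGroup (Fin 2))) := by
  have hof := not_isOfFinOrder_of_isMulTorsionFree (FreeGroup.of_ne_one (0 : Fin 2))
  exact cPrimeSixth_no_subgroup_F2_prod_F2_general R hSym hC' hof hof
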